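/- There exists a real number τ > 0 such that every graph G that is both C₇-free and (complement of C₇)-free satisfies max(α(G), ω(G)) ≥ |G|^τ; that is, {C₇, C̄₇} has the Erdős–Hajnal property. -/

import Mathlib

open SimpleGraph

/-- The independence (stable set) number of a graph: the clique number of the complement. -/
noncomputable def alphaNum {V : Type*} (G : SimpleGraph V) : ℕ := Gᶜ.cliqueNum

/-- The clique number of a graph. -/
noncomputable def omegaNum {V : Type*} (G : SimpleGraph V) : ℕ := G.cliqueNum

/-- κ(G) = α(G)·ω(G). -/
noncomputable def kappaNum {V : Type*} (G : SimpleGraph V) : ℕ := alphaNum G * omegaNum G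

section
open Finset Classical

/-- `G` has no induced cycle of length seven. -/
def NoC7 {V : Type*} (G : SimpleGraph V) : Prop := ¬ Nonempty (cycleGraph 7 ↪g G)

/-- The neighbours of `v` inside `X`. -/
noncomputable def nb {V : Type*} (G : SimpleGraph V) (X : Finset V) (v : V) : Finset V :=
  X.filter (G.Adj v)

/-- `A` and `B` are disjoint with no edges between them. -/
def Anti {V : Type*} (G : SimpleGraph V) (A B : Finset V) : Prop :=
  ∀ a ∈ A, ∀ b ∈ B, a ≠ b ∧ ¬ G.Adj a b

/-- `T` is a stable set of `G`. -/
def Stab {V : Type*} (G : SimpleGraph V) (T : Finset V) : Prop :=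
  ∀ a ∈ T, ∀ b ∈ T, ¬ G.Adj a b

variable {V : Type*} {G : SimpleGraph V}

theorem mem_nb {X : Finset V} {v x : V} : x ∈ nb G X v ↔ x ∈ X ∧ G.Adj v x := by
  simp [nb]

theorem nb_subset {X : Finset V} {v : V} : nb G X v ⊆ X := filter_subset _ _

theorem nb_mono {X Y : Finset V} (h : X ⊆ Y) {v : V} : nb G X v ⊆ nb G Y v :=
  filter_subset_filter _ h

theorem Stab.insert {S : Finset V} {k : V} (hS : Stab G S) (h : ∀ y ∈ S, ¬ G.Adj k y) :
    Stab G (insert k S) := by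
  intro x hx y hy
  rcases mem_insert.1 hx with rfl | hx' <;> rcases mem_insert.1 hy with rfl | hy'
  · simp
  · exact h y hy'
  · exact fun e => h x hx' e.symm
  · exact hS x hx' y hy'

theorem cycleGraph_seven_adj_ext :
    ∀ i j : Fin 7, (∀ k, (cycleGraph 7).Adj i k ↔ (cycleGraph 7).Adj j k) → i = j := by
  decide

theorem NoC7.not_pattern (hG : NoC7 G) (f : Fin 7 → V)
    (hf : ∀ i j, i < j → (G.Adj (f i) (f j) ↔ (cycleGraph 7).Adj i j)) : False := by
  have key : ∀ i j, G.Adj (f i) (f j) ↔ (cycleGraph 7).Adj i j := by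
    intro i j
    rcases lt_trichotomy i j with h | h | h
    · exact hf i j h
    · subst h; simp
    · rw [G.adj_comm, hf j i h, SimpleGraph.adj_comm]
  refine hG ⟨⟨⟨f, fun i j hij => ?_⟩, fun {i j} => key i j⟩⟩
  refine cycleGraph_seven_adj_ext i j fun k => ?_
  rw [← key, ← key, hij]

theorem NoC7.elim (hG : NoC7 G) {a b c d e f g : V}
    (ab : G.Adj a b) (bc : G.Adj b c) (cd : G.Adj c d) (de : G.Adj d e) (ef : G.Adj e f)
    (fg : G.Adj f g) (ga : G.Adj g a)
    (ac : ¬ G.Adj a c) (ad : ¬ G.Adj a d) (ae : ¬ G.Adj a e) (af : ¬ G.Adj a f)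
    (bd : ¬ G.Adj b d) (be : ¬ G.Adj b e) (bf : ¬ G.Adj b f) (bg : ¬ G.Adj b g)
    (ce : ¬ G.Adj c e) (cf : ¬ G.Adj c f) (cg : ¬ G.Adj c g)
    (df : ¬ G.Adj d f) (dg : ¬ G.Adj d g) (eg : ¬ G.Adj e g) : False := by
  refine hG.not_pattern ![a, b, c, d, e, f, g] ?_
  have key : ∀ i j : Fin 7, i < j → ((cycleGraph 7).Adj i j ↔ j = i + 1 ∨ (i = 0 ∧ j = 6)) := by
    decide
  intro i j hij
  rw [key i j hij]
  have ag := ga.symm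
  fin_cases i <;> fin_cases j <;> simp_all

/-- Greedy choice of a set that is independent for a symmetric relation of bounded degree. -/
theorem exists_independent {α : Type*} (r : α → α → Prop) (hr : ∀ x y, r x y → r y x) (k : ℕ) :
    ∀ (q : ℕ) (J : Finset α), (∀ j ∈ J, #(J.filter fun x => x ≠ j ∧ r j x) ≤ k) →
      q * (k + 1) ≤ #J → ∃ T ⊆ J, #T = q ∧ ∀ x ∈ T, ∀ y ∈ T, x ≠ y → ¬ r x y := by
  intro q
  induction q with
  | zero => exact fun J _ _ => ⟨∅, by simp⟩
  | succ q ih =>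
    intro J hJ hq
    have hne : J.Nonempty := by
      rw [← Finset.card_pos]; nlinarith
    obtain ⟨j, hj⟩ := hne
    set J' := J.filter fun x => x ≠ j ∧ ¬ r j x with hJ'
    have hcard : #J ≤ #J' + #(J.filter fun x => x ≠ j ∧ r j x) + 1 := by
      have : J ⊆ insert j (J' ∪ J.filter fun x => x ≠ j ∧ r j x) := by
        intro x hx
        simp only [hJ', mem_insert, mem_union, mem_filter]
        tauto
      calc #J ≤ _ := card_le_card this
        _ ≤ _ := card_insert_le _ _
        _ ≤ _ := by gcongr; exact card_union_le _ _
    have hsub : J' ⊆ J := filter_subset _ _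
    obtain ⟨T, hT, hTq, hTr⟩ := ih J'
      (fun x hx => (card_le_card (filter_subset_filter _ hsub)).trans (hJ x (hsub hx)))
      (by have := hJ j hj; nlinarith)
    have hjT : j ∉ T := fun h => by
      have := hT h
      simp [hJ'] at this
    have hT2 : ∀ x ∈ T, ¬ r j x := fun x hx => by
      have := hT hx
      simp only [hJ', mem_filter] at this
      exact this.2.2
    refine ⟨insert j T, ?_, by rw [card_insert_of_notMem hjT, hTq], ?_⟩
    · intro x hx
      rcases mem_insert.1 hx with rfl | hx
      · exact hj
      · exact hsub (hT hx)
    · intro x hx y hy hxy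
      rcases mem_insert.1 hx with rfl | hx' <;> rcases mem_insert.1 hy with rfl | hy'
      · exact absurd rfl hxy
      · exact hT2 y hy'
      · exact fun h => hT2 x hx' (hr _ _ h)
      · exact hTr x hx' y hy' hxy

/-- If every stable set in `J` is small then some vertex has large degree in `J`. -/
theorem exists_large_nb {J : Finset V} {t k : ℕ} (h : ∀ T ⊆ J, Stab G T → #T < t)
    (hJ : t * k ≤ #J) (hk : 0 < k) : ∃ j ∈ J, k ≤ #(nb G J j) := by
  by_contra! hc
  obtain ⟨T, hT, hc1, hc2⟩ := exists_independent G.Adj (fun _ _ h => h.symm) (k - 1) t J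
    (fun j hj => by
      have : J.filter (fun x => x ≠ j ∧ G.Adj j x) ⊆ nb G J j := fun x hx => by
        simp only [mem_filter] at hx; exact mem_nb.2 ⟨hx.1, hx.2.2⟩
      have := card_le_card this
      have := hc j hj
      omega) (by rwa [Nat.sub_add_cancel hk])
  have := h T hT fun a ha b hb hab => hc2 a ha b hb hab.ne hab
  omega

/-- A graph with no induced path on four vertices. -/
theorem card_le_of_noP4 (a : ℕ) : ∀ (b : ℕ) (W : Finset V),
    (∀ x ∈ W, ∀ y ∈ W, ∀ z ∈ W, ∀ w ∈ W, G.Adj x y → G.Adj y z → G.Adj z w →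
      ¬ G.Adj x z → ¬ G.Adj y w → ¬ G.Adj x w → x ≠ z → y ≠ w → x ≠ w → False) →
    (∀ T ⊆ W, Stab G T → #T ≤ a) → (∀ T ⊆ W, Stab Gᶜ T → #T ≤ b) → #W ≤ a * b := by
  intro b
  induction b with
  | zero =>
    intro W _ _ hb
    rcases W.eq_empty_or_nonempty with rfl | ⟨x, hx⟩
    · simp
    · have := hb {x} (by simpa using hx) (by intro u hu v hv; simp_all)
      simp at this
  | succ b ih =>
    intro W hP ha hb
    obtain ⟨S, hSmem, hSmax⟩ := exists_max_image (W.powerset.filter (Stab G)) card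
      ⟨∅, by simp [Stab]⟩
    simp only [mem_filter, mem_powerset, and_imp] at hSmem hSmax
    obtain ⟨hSW, hS⟩ := hSmem
    have hsd : W \ S ⊆ W := sdiff_subset
    have := ih (W \ S) (fun x hx y hy z hz w hw => hP x (hsd hx) y (hsd hy) z (hsd hz) w (hsd hw))
      (fun T hT => ha T (hT.trans hsd)) ?_
    · have h1 := ha S hSW hS
      have h2 := card_sdiff_add_card_eq_card hSW
      nlinarith
    intro K hK hKc
    by_contra! hKb
    have hKW := hK.trans hsd
    have hadj : ∀ x ∈ K, ∀ y ∈ K, x ≠ y → G.Adj x y := by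
      intro x hx y hy hxy
      have := hKc x hx y hy
      simp only [compl_adj, not_and, not_not] at this
      exact this hxy
    have hKS : ∀ x ∈ K, x ∉ S := fun x hx => (mem_sdiff.1 (hK hx)).2
    -- every vertex of the clique has a neighbour in the stable set
    have hn1 : ∀ k ∈ K, ∃ s ∈ S, G.Adj k s := by
      intro k hk
      by_contra! hcon
      have := hSmax (insert k S) (insert_subset (hKW hk) hSW) (hS.insert hcon)
      rw [card_insert_of_notMem (hKS k hk)] at this
      omega
    have hn2 : ∀ s ∈ S, ∃ k ∈ K, ¬ G.Adj s k := by
      intro s hs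
      by_contra! hcon
      have hsK : s ∉ K := fun h => hKS s h hs
      have := hb (insert s K) (insert_subset (hSW hs) hKW)
        (hKc.insert fun y hy => by simp [hcon y hy])
      rw [card_insert_of_notMem hsK] at this
      omega
    have hKne : K.Nonempty := by rw [← Finset.card_pos]; omega
    obtain ⟨k0, hk0⟩ := hKne
    obtain ⟨s0, hs0, -⟩ := hn1 k0 hk0
    obtain ⟨s, hs, hsmax⟩ := exists_max_image S (fun s => #(nb G K s)) ⟨s0, hs0⟩
    obtain ⟨k, hk, hsk⟩ := hn2 s hs
    obtain ⟨s', hs', hks'⟩ := hn1 k hk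
    have : ¬ nb G K s ⊆ nb G K s' := by
      intro hsub
      have hlt : nb G K s ⊂ nb G K s' := by
        refine (ssubset_iff_of_subset hsub).2 ⟨k, mem_nb.2 ⟨hk, hks'.symm⟩, ?_⟩
        simp [mem_nb, hsk]
      have := hsmax s' hs'
      have := card_lt_card hlt
      omega
    obtain ⟨k', hk', hk''⟩ := not_subset.1 this
    rw [mem_nb] at hk' hk''
    have hkk : k' ≠ k := by rintro rfl; exact hsk hk'.2
    have hne : ∀ x ∈ S, ∀ y ∈ K, x ≠ y := by rintro x hx y hy rfl; exact hKS x hy hx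
    refine hP s (hSW hs) k' (hKW hk'.1) k (hKW hk) s' (hSW hs') hk'.2 (hadj _ hk'.1 _ hk hkk) hks'
      hsk (fun h => hk'' ⟨hk'.1, h.symm⟩) (hS s hs s' hs') (hne _ hs _ hk)
      (hne _ hs' _ hk'.1).symm ?_
    rintro rfl
    exact hsk hks'.symm
end

section
open Finset Classical
variable {V : Type*} {G : SimpleGraph V}

/-- Containers for stable sets: if every subset of `U` with at least `n` elements has a vertex
of relative degree at least `1 / p`, then each stable set is determined up to a small container
by a fingerprint of size at most `s`. -/
theorem exists_container (n p : ℕ) (hp : 0 < p) :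
    ∀ (u s : ℕ) (U : Finset V), #U = u →
    (∀ U' ⊆ U, n ≤ #U' → ∃ x ∈ U', #U' ≤ p * #(nb G U' x)) →
    ((#U : ℝ) * (1 - 1 / p) ^ s < n) →
    ∃ C : Finset V → Finset V, (∀ F, #(C F) ≤ n) ∧
      ∀ T ⊆ U, Stab G T → ∃ F ⊆ T, #F ≤ s ∧ T \ F ⊆ C F := by
  intro u
  induction u using Nat.strong_induction_on with
  | _ u ih =>
  intro s U hU hdeg hs
  by_cases hUn : #U < n
  · exact ⟨fun _ => U, fun _ => hUn.le, fun T hT _ => ⟨∅, by simp, by simp, by simpa using hT⟩⟩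
  push Not at hUn
  obtain ⟨x, hx, hxd⟩ := hdeg U subset_rfl hUn
  have hp1 : (0 : ℝ) ≤ 1 - 1 / p := by
    have : (1 : ℝ) ≤ p := by exact_mod_cast hp
    rw [sub_nonneg]; exact div_le_one_of_le₀ this (by positivity)
  obtain ⟨s, rfl⟩ : ∃ s', s = s' + 1 := by
    cases s with
    | zero => simp at hs; omega
    | succ s => exact ⟨s, rfl⟩
  set U1 := (U.erase x) \ nb G U x with hU1
  set U2 := U.erase x with hU2
  have hlt2 : #U2 < u := by rw [← hU]; exact card_erase_lt_of_mem hx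
  have h12 : U1 ⊆ U2 := sdiff_subset
  have h2U : U2 ⊆ U := erase_subset _ _
  have hc1 : (#U1 : ℝ) ≤ #U * (1 - 1 / p) := by
    have h1 : #U1 + #(nb G U x) ≤ #U := by
      rw [← card_union_of_disjoint (sdiff_disjoint)]
      exact card_le_card (union_subset (h12.trans h2U) nb_subset)
    have h2 : (#U1 : ℝ) + #(nb G U x) ≤ #U := by exact_mod_cast h1
    have h3 : (#U : ℝ) ≤ p * #(nb G U x) := by exact_mod_cast hxd
    have h4 : (0 : ℝ) < p := by exact_mod_cast hp
    have h5 : (#U : ℝ) / p ≤ #(nb G U x) := by rw [div_le_iff₀ h4]; linarith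
    have : (#U : ℝ) * (1 - 1 / p) = #U - #U / p := by ring
    linarith
  obtain ⟨C1, hC1, hC1'⟩ := ih #U1 ((card_le_card h12).trans_lt hlt2) s U1 rfl
    (fun U' h => hdeg U' (h.trans (h12.trans h2U))) (by
      refine lt_of_le_of_lt ?_ hs
      rw [pow_succ']
      calc (#U1 : ℝ) * (1 - 1 / p) ^ s ≤ (#U * (1 - 1 / p)) * (1 - 1 / p) ^ s := by gcongr
        _ = _ := by ring)
  obtain ⟨C2, hC2, hC2'⟩ := ih #U2 hlt2 (s + 1) U2 rfl
    (fun U' h => hdeg U' (h.trans h2U)) (by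
      refine lt_of_le_of_lt ?_ hs
      have : (#U2 : ℝ) ≤ #U := by exact_mod_cast card_le_card h2U
      gcongr)
  refine ⟨fun F => if x ∈ F then C1 (F.erase x) else C2 F, fun F => ?_, fun T hT hTs => ?_⟩
  · dsimp only; split_ifs
    · exact hC1 _
    · exact hC2 _
  by_cases hxT : x ∈ T
  · obtain ⟨F, hF, hFs, hFC⟩ := hC1' (T.erase x) (by
      intro y hy
      rw [mem_erase] at hy
      rw [hU1, mem_sdiff, mem_erase, mem_nb]
      exact ⟨⟨hy.1, hT hy.2⟩, fun h => hTs x hxT y hy.2 h.2⟩)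
      (fun a ha b hb => hTs a (mem_of_mem_erase ha) b (mem_of_mem_erase hb))
    have hxF : x ∉ F := fun h => by simpa using hF h
    refine ⟨insert x F, insert_subset hxT (hF.trans (erase_subset _ _)), ?_, ?_⟩
    · rw [card_insert_of_notMem hxF]; omega
    · simp only [mem_insert_self, if_true, erase_insert hxF]
      refine Subset.trans ?_ hFC
      intro y hy
      simp only [mem_sdiff, mem_insert, mem_erase, not_or] at hy ⊢
      tauto
  · obtain ⟨F, hF, hFs, hFC⟩ := hC2' T (fun y hy => by
      rw [hU2, mem_erase]; exact ⟨fun h => hxT (h ▸ hy), hT hy⟩) hTs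
    have hxF : x ∉ F := fun h => hxT (hF h)
    exact ⟨F, hF, hFs, by simpa [hxF] using hFC⟩

/-- Counting functions whose values on `Q` lie in a small set depending on the other values. -/
theorem card_functions_le {r n : ℕ} (M : Finset V) (Q : Finset (Fin r))
    (C : (Fin r → V) → Finset V) (hC : ∀ f, #(C f) ≤ n)
    (hdep : ∀ f g, (∀ i, i ∉ Q → f i = g i) → C f = C g) :
    #((Fintype.piFinset fun _ : Fin r => M).filter fun f => ∀ b ∈ Q, f b ∈ C f) ≤
      n ^ #Q * #M ^ (r - #Q) := by
  rcases isEmpty_or_nonempty V with hV | ⟨⟨x0⟩⟩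
  · rcases Nat.eq_zero_or_pos r with rfl | hr
    · have : Q = ∅ := eq_empty_of_isEmpty Q
      subst this
      simp
    · have : IsEmpty (Fin r → V) := ⟨fun f => hV.elim (f ⟨0, hr⟩)⟩
      simp [eq_empty_of_isEmpty]
  set red : (Fin r → V) → (Fin r → V) := fun f i => if i ∈ Q then x0 else f i with hred
  set S := (Fintype.piFinset fun _ : Fin r => M).filter fun f => ∀ b ∈ Q, f b ∈ C f with hS
  have himg : #(S.image red) ≤ #M ^ (r - #Q) := by
    have hsub : S.image red ⊆ Fintype.piFinset fun i => if i ∈ Q then {x0} else M := by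
      intro g hg
      obtain ⟨f, hf, rfl⟩ := mem_image.1 hg
      rw [hS, mem_filter, Fintype.mem_piFinset] at hf
      rw [Fintype.mem_piFinset]
      intro i
      by_cases hi : i ∈ Q <;> simp [hred, hi, hf.1 i]
    refine (card_le_card hsub).trans ?_
    rw [Fintype.card_piFinset]
    have : ∀ i : Fin r, #(if i ∈ Q then {x0} else M) = if i ∈ Q then 1 else #M := by
      intro i; split_ifs <;> simp
    simp only [this]
    rw [prod_ite]
    simp only [prod_const_one, prod_const, one_mul]
    have : #(univ.filter fun i => i ∉ Q) = r - #Q := by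
      rw [filter_not, filter_mem_eq_inter, univ_inter, card_sdiff_of_subset (subset_univ _)]; simp
    rw [this]
  have hfib : ∀ a ∈ S.image red, #(S.filter fun f => red f = a) ≤ n ^ #Q := by
    intro a _
    have hsub : (S.filter fun f => red f = a) ⊆
        Fintype.piFinset fun i => if i ∈ Q then C a else {a i} := by
      intro f hf
      rw [mem_filter, hS, mem_filter] at hf
      obtain ⟨⟨hfM, hfC⟩, rfl⟩ := hf
      rw [Fintype.mem_piFinset]
      intro i
      by_cases hi : i ∈ Q
      · simp only [hi, if_true]
        rw [hdep (red f) f fun j hj => by simp [hred, hj]]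
        exact hfC i hi
      · simp [hred, hi]
    refine (card_le_card hsub).trans ?_
    rw [Fintype.card_piFinset]
    have : ∀ i : Fin r, #(if i ∈ Q then C a else {a i}) = if i ∈ Q then #(C a) else 1 := by
      intro i; split_ifs <;> simp
    simp only [this]
    rw [prod_ite]
    simp only [prod_const_one, prod_const, mul_one]
    rw [filter_mem_eq_inter, univ_inter]
    exact Nat.pow_le_pow_left (hC a) _
  calc #S ≤ n ^ #Q * #(S.image red) := card_le_mul_card_image _ _ hfib
    _ ≤ _ := by gcongr
end

section
open Finset Classical
variable {V : Type*} {G : SimpleGraph V}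

/-- `W` contains a stable set of size at least `k`. -/
def HasStab {V : Type*} (G : SimpleGraph V) (W : Finset V) (k : ℕ) : Prop :=
  ∃ T ⊆ W, Stab G T ∧ k ≤ #T

theorem card_small_subsets_le (r s : ℕ) :
    #((univ : Finset (Finset (Fin r))).filter fun P => #P ≤ s) ≤ (r + 1) ^ s := by
  have h1 : ((univ : Finset (Finset (Fin r))).filter fun P => #P ≤ s) ⊆
      (range (s + 1)).biUnion fun k => powersetCard k (univ : Finset (Fin r)) := by
    intro P hP
    simp only [mem_filter, mem_univ, true_and] at hP
    simp only [mem_biUnion, mem_range, mem_powersetCard]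
    exact ⟨#P, by omega, subset_univ _, rfl⟩
  calc _ ≤ _ := card_le_card h1
    _ ≤ ∑ k ∈ range (s + 1), #(powersetCard k (univ : Finset (Fin r))) := card_biUnion_le
    _ ≤ ∑ k ∈ range (s + 1), r ^ k * 1 ^ (s - k) * s.choose k := by
      refine sum_le_sum fun k hk => ?_
      rw [card_powersetCard, card_univ, Fintype.card_fin, one_pow, mul_one]
      have : 1 ≤ s.choose k := Nat.choose_pos (by simp at hk; omega)
      calc r.choose k ≤ r ^ k * 1 := by rw [mul_one]; exact Nat.choose_le_pow _ _
        _ ≤ _ := by gcongr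
    _ = _ := (add_pow _ _ _).symm

/-- Few samples contain a large stable set of a graph without large sparse subsets. -/
theorem card_sample_stable_le {n p s r : ℕ} (M : Finset V) (hp : 0 < p) (hs0 : 0 < s) (hsr : s ≤ r)
    (hdeg : ∀ U ⊆ M, n ≤ #U → ∃ x ∈ U, #U ≤ p * #(nb G U x))
    (hs : (#M : ℝ) * (1 - 1 / p) ^ s < n) (hM : 16 * (r + 1) ^ 2 * n ≤ #M) :
    16 * #((Fintype.piFinset fun _ : Fin r => M).filter fun f =>
      HasStab G (univ.image f) (2 * s)) ≤ #M ^ r := by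
  obtain ⟨C, hC, hCT⟩ := exists_container n p hp #M s M rfl hdeg hs
  set C' : Finset (Fin r) → Finset (Fin r) → (Fin r → V) → Finset V :=
    fun P Q f => if Disjoint P Q then C (P.image f) else ∅ with hC'
  set Ps := (univ : Finset (Finset (Fin r))).filter fun P => #P ≤ s with hPs
  set Qs := powersetCard s (univ : Finset (Fin r)) with hQs
  have hsub : ((Fintype.piFinset fun _ : Fin r => M).filter fun f =>
      HasStab G (univ.image f) (2 * s)) ⊆
      (Ps ×ˢ Qs).biUnion fun z => (Fintype.piFinset fun _ : Fin r => M).filter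
        fun f => ∀ b ∈ z.2, f b ∈ C' z.1 z.2 f := by
    intro f hf
    rw [mem_filter] at hf
    obtain ⟨hfM, T, hT, hTs, hTc⟩ := hf
    have hTM : T ⊆ M := fun x hx => by
      obtain ⟨i, -, rfl⟩ := mem_image.1 (hT hx)
      exact Fintype.mem_piFinset.1 hfM i
    obtain ⟨F, hFT, hFs, hFC⟩ := hCT T hTM hTs
    obtain ⟨Q0, hQ0, hQ0c⟩ := exists_subset_card_eq (s := T \ F) (n := s) (by
      rw [card_sdiff_of_subset hFT]; omega)
    have hlift : ∀ A ⊆ univ.image f, ∃ P : Finset (Fin r), #P = #A ∧ P.image f = A := by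
      intro A hA
      obtain ⟨P, -, hP, hPA⟩ := exists_subset_injOn_image_eq_of_surjOn (f := f)
        (s := Set.univ) A (by
        intro x hx
        obtain ⟨i, -, rfl⟩ := mem_image.1 (hA hx)
        exact ⟨i, trivial, rfl⟩)
      exact ⟨P, by rw [← card_image_of_injOn hP, hPA], hPA⟩
    obtain ⟨P, hPc, hPF⟩ := hlift F (hFT.trans hT)
    obtain ⟨Q, hQc, hQF⟩ := hlift Q0 (hQ0.trans (sdiff_subset.trans hT))
    have hdis : Disjoint P Q := by
      rw [Finset.disjoint_left]
      intro i hi hi'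
      have h1 : f i ∈ F := hPF ▸ mem_image_of_mem f hi
      have h2 : f i ∈ Q0 := hQF ▸ mem_image_of_mem f hi'
      exact (mem_sdiff.1 (hQ0 h2)).2 h1
    simp only [mem_biUnion, mem_product]
    refine ⟨(P, Q), ⟨by simp [hPs]; omega, by simp [hQs]; omega⟩, ?_⟩
    rw [mem_filter]
    refine ⟨hfM, fun b hb => ?_⟩
    simp only [hC', hdis, if_true, hPF]
    exact hFC (hQ0 (hQF ▸ mem_image_of_mem f hb))
  have hbound : #((Fintype.piFinset fun _ : Fin r => M).filter fun f =>
      HasStab G (univ.image f) (2 * s)) ≤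
      (r + 1) ^ s * r ^ s * (n ^ s * #M ^ (r - s)) := by
    refine (card_le_card hsub).trans
      ((card_biUnion_le_card_mul _ _ (n ^ s * #M ^ (r - s)) ?_).trans ?_)
    · rintro ⟨P, Q⟩ hPQ
      have hQ : #Q = s := by
        simp only [mem_product, hQs, mem_powersetCard] at hPQ; exact hPQ.2.2
      have := card_functions_le (n := n) M Q (C' P Q) (fun f => by
        simp only [hC']; split_ifs
        · exact hC _
        · simp) (fun f g hfg => by
          simp only [hC']; split_ifs with h
          · congr 1
            refine image_congr fun i hi => hfg i ?_
            exact fun hi' => Finset.disjoint_left.1 h hi hi'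
          · rfl)
      rw [hQ] at this
      exact this
    · gcongr
      rw [card_product]
      gcongr
      · exact card_small_subsets_le r s
      · rw [hQs, card_powersetCard, card_univ, Fintype.card_fin]; exact Nat.choose_le_pow _ _
  calc 16 * _ ≤ 16 ^ s * ((r + 1) ^ s * r ^ s * (n ^ s * #M ^ (r - s))) := by
        gcongr
        calc 16 = 16 ^ 1 := by norm_num
          _ ≤ 16 ^ s := Nat.pow_le_pow_right (by norm_num) hs0
    _ = (16 * ((r + 1) * r) * n) ^ s * #M ^ (r - s) := by simp only [mul_pow]; ring
    _ ≤ #M ^ s * #M ^ (r - s) := by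
        gcongr
        refine le_trans ?_ hM
        gcongr
        nlinarith
    _ = #M ^ r := by rw [← pow_add]; congr 1; omega

/-- Few samples contain a conflicting pair. -/
theorem card_sample_conflict_le {r c : ℕ} (M : Finset V) (conf : V → V → Prop)
    (hc : ∀ w ∈ M, #(M.filter (conf w)) ≤ c) (hM : 2 * r ^ 2 * c ≤ #M) (hr : 0 < r) :
    2 * #((Fintype.piFinset fun _ : Fin r => M).filter fun f =>
      ∃ i j, i ≠ j ∧ conf (f i) (f j)) ≤ #M ^ r := by
  have hsub : ((Fintype.piFinset fun _ : Fin r => M).filter fun f =>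
      ∃ i j, i ≠ j ∧ conf (f i) (f j)) ⊆ (univ : Finset (Fin r × Fin r)).biUnion fun z =>
      (Fintype.piFinset fun _ : Fin r => M).filter fun f => ∀ b ∈ ({z.2} : Finset (Fin r)),
        f b ∈ if z.1 = z.2 ∨ f z.1 ∉ M then ∅ else M.filter (conf (f z.1)) := by
    intro f hf
    rw [mem_filter] at hf
    obtain ⟨hfM, i, j, hij, hcf⟩ := hf
    simp only [mem_biUnion]
    have hm := Fintype.mem_piFinset.1 hfM
    refine ⟨(i, j), mem_univ _, ?_⟩
    rw [mem_filter]
    refine ⟨hfM, fun b hb => ?_⟩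
    rw [mem_singleton] at hb
    subst hb
    simp [hij, hm i, hm b, hcf]
  have hbound := (card_le_card hsub).trans (card_biUnion_le_card_mul _ _ (c * #M ^ (r - 1)) ?_)
  · calc 2 * _ ≤ 2 * (#(univ : Finset (Fin r × Fin r)) * (c * #M ^ (r - 1))) := by gcongr
      _ = (2 * r ^ 2 * c) * #M ^ (r - 1) := by simp [card_univ]; ring
      _ ≤ #M * #M ^ (r - 1) := by gcongr
      _ = #M ^ r := by rw [← pow_succ']; congr 1; omega
  · rintro ⟨i, j⟩ -
    have := card_functions_le (n := c) M {j}
      (fun f => if i = j ∨ f i ∉ M then ∅ else M.filter (conf (f i))) (fun f => by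
        split_ifs with h
        · simp
        · push Not at h; exact hc _ h.2) (fun f g hfg => by
          by_cases hij : i = j
          · simp [hij]
          · have : f i = g i := hfg i (by simpa using hij)
            simp [this])
    simpa using this
end

section
open Finset Classical
variable {V : Type*} {G : SimpleGraph V}

/-- A conflict-free sample with no large stable set in any of four given graphs. -/
theorem exists_sample {n p s r c : ℕ} (M : Finset V) (Gs : Fin 4 → SimpleGraph V)
    (conf : V → V → Prop) (hrefl : ∀ w, conf w w)
    (hp : 0 < p) (hs0 : 0 < s) (hsr : s ≤ r)
    (hdeg : ∀ k, ∀ U ⊆ M, n ≤ #U → ∃ x ∈ U, #U ≤ p * #(nb (Gs k) U x))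
    (hs : (#M : ℝ) * (1 - 1 / p) ^ s < n) (hM : 16 * (r + 1) ^ 2 * n ≤ #M)
    (hc : ∀ w ∈ M, #(M.filter (conf w)) ≤ c) (hMc : 2 * r ^ 2 * c ≤ #M) :
    ∃ W ⊆ M, #W = r ∧ (∀ w ∈ W, ∀ w' ∈ W, w ≠ w' → ¬ conf w w') ∧
      ∀ k, ∀ T ⊆ W, Stab (Gs k) T → #T < 2 * s := by
  have hn : 0 < n := by
    have hp1 : (0 : ℝ) ≤ 1 - 1 / p := by
      have : (1 : ℝ) ≤ p := by exact_mod_cast hp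
      rw [sub_nonneg]; exact div_le_one_of_le₀ this (by positivity)
    have : (0 : ℝ) < n := lt_of_le_of_lt (by positivity) hs
    exact_mod_cast this
  have hM0 : 0 < #M := lt_of_lt_of_le (by positivity) hM
  set Ω := Fintype.piFinset fun _ : Fin r => M with hΩ
  have hΩc : #Ω = #M ^ r := by simp [hΩ, Fintype.card_piFinset]
  have hΩ0 : 0 < #Ω := by rw [hΩc]; positivity
  have hb := fun k => card_sample_stable_le (G := Gs k) M hp hs0 hsr (hdeg k) hs hM
  have hcf := card_sample_conflict_le M conf hc hMc (by omega)
  replace hcf : 2 * #(Ω.filter fun f => ∃ i j, i ≠ j ∧ conf (f i) (f j)) ≤ #Ω := by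
    rw [hΩc]; convert hcf
  simp only [← hΩc] at hb
  obtain ⟨f, hf, hf1, hf2⟩ : ∃ f ∈ Ω, (¬ ∃ i j, i ≠ j ∧ conf (f i) (f j)) ∧
      ∀ k, ¬ HasStab (Gs k) (univ.image f) (2 * s) := by
    by_contra! hcon
    have hsub : Ω ⊆ (Ω.filter fun f => ∃ i j, i ≠ j ∧ conf (f i) (f j)) ∪
        (univ : Finset (Fin 4)).biUnion fun k =>
          Ω.filter fun f => HasStab (Gs k) (univ.image f) (2 * s) := by
      intro f hf
      simp only [mem_union, mem_filter, mem_biUnion, mem_univ, true_and, hf]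
      by_cases h : ∃ i j, i ≠ j ∧ conf (f i) (f j)
      · exact Or.inl h
      · refine Or.inr (hcon f hf ?_)
        push Not at h
        exact h
    have h1 := (card_le_card hsub).trans (card_union_le _ _)
    have h2 := card_biUnion_le (s := (univ : Finset (Fin 4)))
      (t := fun k => Ω.filter fun f => HasStab (Gs k) (univ.image f) (2 * s))
    have h3 : 16 * ∑ k : Fin 4, #(Ω.filter fun f => HasStab (Gs k) (univ.image f) (2 * s)) ≤
        4 * #Ω := by
      rw [mul_sum]
      refine (sum_le_sum fun k _ => hb k).trans ?_
      simp
    omega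
  have hinj : Function.Injective f := by
    intro i j hij
    by_contra hne
    exact hf1 ⟨i, j, hne, hij ▸ hrefl _⟩
  refine ⟨univ.image f, ?_, by simp [card_image_of_injective _ hinj], ?_, ?_⟩
  · intro x hx
    obtain ⟨i, -, rfl⟩ := mem_image.1 hx
    exact Fintype.mem_piFinset.1 hf i
  · intro w hw w' hw' hne hcf
    obtain ⟨i, -, rfl⟩ := mem_image.1 hw
    obtain ⟨j, -, rfl⟩ := mem_image.1 hw'
    exact hf1 ⟨i, j, fun h => hne (h ▸ rfl), hcf⟩
  · intro k T hT hTs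
    by_contra! h
    exact hf2 k ⟨T, hT, hTs, h⟩

/-- A family of triples `(w, φ w, ψ w)`, `w ∈ W`, together with apices `a` and `b`, in which the
only possible edges between different triples join vertices of the same kind. -/
structure Triples (G : SimpleGraph V) (W : Finset V) (φ ψ : V → V) (a b : V) : Prop where
  adjφ : ∀ w ∈ W, G.Adj w (φ w)
  adjψ : ∀ w ∈ W, G.Adj w (ψ w)
  naφ : ∀ w ∈ W, ∀ w' ∈ W, w ≠ w' → ¬ G.Adj w (φ w')
  naψ : ∀ w ∈ W, ∀ w' ∈ W, w ≠ w' → ¬ G.Adj w (ψ w')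
  naφψ : ∀ w ∈ W, ∀ w' ∈ W, w ≠ w' → ¬ G.Adj (φ w) (ψ w')
  aφ : ∀ w ∈ W, G.Adj a (φ w)
  bψ : ∀ w ∈ W, G.Adj b (ψ w)
  nA : ∀ w ∈ W, ¬ G.Adj a w
  nB : ∀ w ∈ W, ¬ G.Adj b w
  naψ' : ∀ w ∈ W, ¬ G.Adj a (ψ w)
  nbφ' : ∀ w ∈ W, ¬ G.Adj b (φ w)

variable {W : Finset V} {φ ψ : V → V} {a b : V}

theorem Triples.swap (h : Triples G W φ ψ a b) : Triples G W ψ φ b a where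
  adjφ := h.adjψ
  adjψ := h.adjφ
  naφ := h.naψ
  naψ := h.naφ
  naφψ := fun w hw w' hw' hne hadj => h.naφψ w' hw' w hw hne.symm hadj.symm
  aφ := h.bψ
  bψ := h.aφ
  nA := h.nB
  nB := h.nA
  naψ' := h.nbφ'
  nbφ' := h.naψ'

theorem Triples.mono (h : Triples G W φ ψ a b) {W' : Finset V} (hW : W' ⊆ W) :
    Triples G W' φ ψ a b where
  adjφ := fun w hw => h.adjφ w (hW hw)
  adjψ := fun w hw => h.adjψ w (hW hw)
  naφ := fun w hw w' hw' => h.naφ w (hW hw) w' (hW hw')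
  naψ := fun w hw w' hw' => h.naψ w (hW hw) w' (hW hw')
  naφψ := fun w hw w' hw' => h.naφψ w (hW hw) w' (hW hw')
  aφ := fun w hw => h.aφ w (hW hw)
  bψ := fun w hw => h.bψ w (hW hw)
  nA := fun w hw => h.nA w (hW hw)
  nB := fun w hw => h.nB w (hW hw)
  naψ' := fun w hw => h.naψ' w (hW hw)
  nbφ' := fun w hw => h.nbφ' w (hW hw)

theorem Triples.adj_of_diag (h : Triples G W φ ψ a b) (hG : NoC7 G)
    (hd : ∀ w ∈ W, G.Adj (φ w) (ψ w)) {x y z : V} (hx : x ∈ W) (hy : y ∈ W) (hz : z ∈ W)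
    (hxz : x ≠ z) (hxy : G.Adj x y) (hyz : G.Adj (φ y) (φ z)) : G.Adj (ψ x) (ψ z) := by
  by_contra hn
  have nxy := hxy.ne
  have nyz : y ≠ z := by rintro rfl; exact hyz.ne rfl
  refine hG.elim (a := x) (b := y) (c := φ y) (d := φ z) (e := ψ z) (f := b) (g := ψ x)
    hxy (h.adjφ y hy) hyz (hd z hz) (h.bψ z hz).symm (h.bψ x hx) (h.adjψ x hx).symm
    (h.naφ _ hx _ hy nxy) (h.naφ _ hx _ hz hxz) (h.naψ _ hx _ hz hxz) (fun e => h.nB x hx e.symm)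
    (h.naφ _ hy _ hz nyz) (h.naψ _ hy _ hz nyz) (fun e => h.nB y hy e.symm)
    (h.naψ _ hy _ hx nxy.symm) (h.naφψ _ hy _ hz nyz) (fun e => h.nbφ' y hy e.symm)
    (h.naφψ _ hy _ hx nxy.symm) (fun e => h.nbφ' z hz e.symm) (h.naφψ _ hz _ hx hxz.symm)
    (fun e => hn e.symm)

theorem Triples.false_of_diag (h : Triples G W φ ψ a b) (hG : NoC7 G)
    (hd : ∀ w ∈ W, G.Adj (φ w) (ψ w)) {t : ℕ} (ht : 0 < t) (hW : t ^ 3 ≤ #W)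
    (h0 : ∀ T ⊆ W, Stab G T → #T < t) (h1 : ∀ T ⊆ W, Stab (G.comap φ) T → #T < t)
    (h2 : ∀ T ⊆ W, Stab (G.comap φ)ᶜ T → #T < t) : False := by
  obtain ⟨w, hw, hwd⟩ := exists_large_nb (k := t ^ 2) h0
    (by rw [← pow_succ']; exact hW) (by positivity)
  have hsub : nb G W w ⊆ W := nb_subset
  obtain ⟨w', hw', hwd'⟩ := exists_large_nb (J := nb G W w) (k := t)
    (fun T hT => h1 T (hT.trans hsub)) (by rw [← sq]; exact hwd) ht
  set X := nb (G.comap φ) (nb G W w) w' with hX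
  have hX1 : ∀ x ∈ X, x ∈ W ∧ G.Adj w x ∧ G.Adj (φ w') (φ x) := by
    intro x hx
    rw [hX, mem_nb, mem_nb] at hx
    exact ⟨hx.1.1, hx.1.2, hx.2⟩
  have hw'2 := mem_nb.1 hw'
  have hψ : ∀ x ∈ X, G.Adj (ψ w) (ψ x) := fun x hx =>
    h.adj_of_diag hG hd hw hw'2.1 (hX1 x hx).1 (hX1 x hx).2.1.ne hw'2.2 (hX1 x hx).2.2
  have hcl : Stab (G.comap φ)ᶜ X := by
    intro x hx y hy
    simp only [compl_adj, comap_adj, not_and, not_not]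
    intro hxy
    exact h.swap.adj_of_diag hG (fun w hw => (hd w hw).symm) (hX1 x hx).1 hw (hX1 y hy).1 hxy
      (hX1 x hx).2.1.symm (hψ y hy)
  have := h2 X (fun x hx => (hX1 x hx).1) hcl
  omega

theorem Triples.false_of_not_diag (h : Triples G W φ ψ a b) (hG : NoC7 G)
    (hd : ∀ w ∈ W, ¬ G.Adj (φ w) (ψ w)) {t : ℕ} (ht : 0 < t) (hW : t ^ 3 ≤ #W)
    (h0 : ∀ T ⊆ W, Stab G T → #T < t) (h1 : ∀ T ⊆ W, Stab Gᶜ T → #T < t) : False := by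
  have rule : ∀ x ∈ W, ∀ y ∈ W, x ≠ y → ¬ G.Adj x y → G.Adj (φ x) (φ y) → G.Adj (ψ x) (ψ y) := by
    intro x hx y hy nxy hxy hφ
    by_contra hn
    exact hG.elim (a := x) (b := φ x) (c := φ y) (d := y) (e := ψ y) (f := b) (g := ψ x)
      (h.adjφ x hx) hφ (h.adjφ y hy).symm (h.adjψ y hy) (h.bψ y hy).symm (h.bψ x hx)
      (h.adjψ x hx).symm (h.naφ _ hx _ hy nxy) hxy (h.naψ _ hx _ hy nxy)
      (fun e => h.nB x hx e.symm) (fun e => h.naφ _ hy _ hx nxy.symm e.symm)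
      (h.naφψ _ hx _ hy nxy) (fun e => h.nbφ' x hx e.symm) (hd x hx) (hd y hy)
      (fun e => h.nbφ' y hy e.symm) (h.naφψ _ hy _ hx nxy.symm) (fun e => h.nB y hy e.symm)
      (h.naψ _ hy _ hx nxy.symm) (fun e => hn e.symm)
  obtain ⟨W', hW', hW'c, hW'2⟩ := exists_independent
    (fun x y => ¬ G.Adj x y ∧ G.Adj (φ x) (φ y)) (fun x y e => ⟨fun e' => e.1 e'.symm, e.2.symm⟩)
    (t - 1) (t ^ 2) W (by
      intro y hy
      set H := W.filter (fun x => x ≠ y ∧ ¬ G.Adj y x ∧ G.Adj (φ y) (φ x)) with hH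
      have hHm : ∀ x ∈ H, x ∈ W ∧ x ≠ y ∧ ¬ G.Adj y x ∧ G.Adj (φ y) (φ x) := by
        intro x hx; simpa [hH] using hx
      have : Stab G H := by
        intro x hx z hz hxz
        obtain ⟨hx1, hx2, hx3, hx4⟩ := hHm x hx
        obtain ⟨hz1, hz2, hz3, hz4⟩ := hHm z hz
        have nxz := hxz.ne
        exact hG.elim (a := x) (b := φ x) (c := φ y) (d := y) (e := ψ y) (f := ψ z) (g := z)
          (h.adjφ x hx1) hx4.symm (h.adjφ y hy).symm (h.adjψ y hy)
          (rule y hy z hz1 hz2.symm hz3 hz4) (h.adjψ z hz1).symm hxz.symm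
          (h.naφ _ hx1 _ hy hx2) (fun e => hx3 e.symm) (h.naψ _ hx1 _ hy hx2)
          (h.naψ _ hx1 _ hz1 nxz) (fun e => h.naφ _ hy _ hx1 hx2.symm e.symm)
          (h.naφψ _ hx1 _ hy hx2) (h.naφψ _ hx1 _ hz1 nxz)
          (fun e => h.naφ _ hz1 _ hx1 nxz.symm e.symm) (hd y hy) (h.naφψ _ hy _ hz1 hz2.symm)
          (fun e => h.naφ _ hz1 _ hy hz2 e.symm) (h.naψ _ hy _ hz1 hz2.symm) hz3
          (fun e => h.naψ _ hz1 _ hy hz2 e.symm)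
      convert Nat.le_sub_one_of_lt (h0 H (filter_subset _ _) this))
    (by rw [Nat.sub_add_cancel ht, ← pow_succ]; exact hW)
  have h' := h.mono hW'
  have := card_le_of_noP4 (G := G) (t - 1) (t - 1) W' (by
    intro x hx y hy z hz w hw hxy hyz hzw nxz nyw nxw exz eyw exw
    have hφ : ¬ G.Adj (φ w) (φ x) := fun e => hW'2 x hx w hw exw ⟨nxw, e.symm⟩
    exact hG.elim (a := x) (b := y) (c := z) (d := w) (e := φ w) (f := a) (g := φ x)
      hxy hyz hzw (h'.adjφ w hw) (h'.aφ w hw).symm (h'.aφ x hx) (h'.adjφ x hx).symm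
      nxz nxw (h'.naφ _ hx _ hw exw) (fun e => h'.nA x hx e.symm)
      nyw (h'.naφ _ hy _ hw eyw) (fun e => h'.nA y hy e.symm) (h'.naφ _ hy _ hx hxy.ne.symm)
      (h'.naφ _ hz _ hw hzw.ne) (fun e => h'.nA z hz e.symm) (h'.naφ _ hz _ hx exz.symm)
      (fun e => h'.nA w hw e.symm) (h'.naφ _ hw _ hx exw.symm) hφ)
    (fun T hT hTs => by have := h0 T (hT.trans hW') hTs; omega)
    (fun T hT hTs => by have := h1 T (hT.trans hW') hTs; omega)
  rw [hW'c] at this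
  have h3 : t - 1 < t := by omega
  nlinarith
end

section
open Finset Classical
variable {V : Type*} {G : SimpleGraph V}

/-- `M` is a matching of edges of `G` from `A` to `B`. -/
structure Matching (G : SimpleGraph V) (A B : Finset V) (M : Finset (V × V)) : Prop where
  left : ∀ e ∈ M, e.1 ∈ A
  right : ∀ e ∈ M, e.2 ∈ B
  adj : ∀ e ∈ M, G.Adj e.1 e.2
  injl : ∀ e ∈ M, ∀ e' ∈ M, e.1 = e'.1 → e = e'
  injr : ∀ e ∈ M, ∀ e' ∈ M, e.2 = e'.2 → e = e'

/-- There is a matching with at least `h` edges from `A` to `B`. -/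
def Linked (G : SimpleGraph V) (A B : Finset V) (h : ℕ) : Prop :=
  ∃ M : Finset (V × V), Matching G A B M ∧ h ≤ #M

theorem Linked.symm {A B : Finset V} {h : ℕ} (H : Linked G A B h) : Linked G B A h := by
  obtain ⟨M, hM, hc⟩ := H
  refine ⟨M.image Prod.swap, ⟨?_, ?_, ?_, ?_, ?_⟩, ?_⟩
  · rintro e he
    obtain ⟨x, hx, rfl⟩ := mem_image.1 he
    exact hM.right x hx
  · rintro e he
    obtain ⟨x, hx, rfl⟩ := mem_image.1 he
    exact hM.left x hx
  · rintro e he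
    obtain ⟨x, hx, rfl⟩ := mem_image.1 he
    exact (hM.adj x hx).symm
  · rintro e he e' he' h
    obtain ⟨x, hx, rfl⟩ := mem_image.1 he
    obtain ⟨y, hy, rfl⟩ := mem_image.1 he'
    rw [hM.injr x hx y hy h]
  · rintro e he e' he' h
    obtain ⟨x, hx, rfl⟩ := mem_image.1 he
    obtain ⟨y, hy, rfl⟩ := mem_image.1 he'
    rw [hM.injl x hx y hy h]
  · rwa [card_image_of_injective _ Prod.swap_injective]

/-- A matching with more edges than forbidden endpoints has an edge avoiding all of them. -/
theorem Matching.exists_avoiding {A B : Finset V} {M : Finset (V × V)} (hM : Matching G A B M)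
    (X Y : Finset V) (h : #X + #Y < #M) : ∃ e ∈ M, e.1 ∉ X ∧ e.2 ∉ Y := by
  by_contra! hc
  have h1 : #(M.filter fun e => e.1 ∈ X) ≤ #X :=
    card_le_card_of_injOn Prod.fst (fun e he => (mem_filter.1 he).2)
      (fun e he e' he' => hM.injl e (mem_filter.1 he).1 e' (mem_filter.1 he').1)
  have h2 : #(M.filter fun e => e.2 ∈ Y) ≤ #Y :=
    card_le_card_of_injOn Prod.snd (fun e he => (mem_filter.1 he).2)
      (fun e he e' he' => hM.injr e (mem_filter.1 he).1 e' (mem_filter.1 he').1)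
  have h3 : M ⊆ (M.filter fun e => e.1 ∈ X) ∪ M.filter fun e => e.2 ∈ Y := by
    intro e he
    simp only [mem_union, mem_filter, he, true_and]
    by_cases hx : e.1 ∈ X
    · exact Or.inl hx
    · exact Or.inr (hc e he hx)
  have := (card_le_card h3).trans (card_union_le _ _)
  omega

/-- If `A` and `B` are not linked, deleting few vertices leaves no edges between them. -/
theorem exists_cover_of_not_linked {A B : Finset V} {h : ℕ} (H : ¬ Linked G A B h) :
    ∃ X Y : Finset V, #X ≤ h ∧ #Y ≤ h ∧
      ∀ x ∈ A, ∀ y ∈ B, x ∉ X → y ∉ Y → ¬ G.Adj x y := by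
  obtain ⟨M, hMm, hmax⟩ := exists_max_image ((A ×ˢ B).powerset.filter (Matching G A B)) card
    ⟨∅, by simp only [mem_filter, empty_mem_powerset, true_and]; constructor <;> simp⟩
  simp only [mem_filter, mem_powerset, and_imp] at hMm hmax
  obtain ⟨-, hM⟩ := hMm
  have hlt : #M < h := by
    by_contra! hc
    exact H ⟨M, hM, hc⟩
  refine ⟨M.image Prod.fst, M.image Prod.snd, card_image_le.trans hlt.le,
    card_image_le.trans hlt.le, fun x hx y hy hxM hyM hxy => ?_⟩
  have hx' : ∀ e ∈ M, e.1 ≠ x := fun e he h => hxM (h ▸ mem_image_of_mem _ he)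
  have hy' : ∀ e ∈ M, e.2 ≠ y := fun e he h => hyM (h ▸ mem_image_of_mem _ he)
  have hnot : (x, y) ∉ M := fun h => hx' _ h rfl
  have hM' : Matching G A B (insert (x, y) M) := by
    refine ⟨?_, ?_, ?_, ?_, ?_⟩
    · simpa [hx] using hM.left
    · simpa [hy] using hM.right
    · simpa [hxy] using hM.adj
    · intro e he e' he' h
      rcases mem_insert.1 he with rfl | he1 <;> rcases mem_insert.1 he' with rfl | he1'
      · rfl
      · exact absurd h.symm (hx' _ he1')
      · exact absurd h (hx' _ he1)
      · exact hM.injl e he1 e' he1' h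
    · intro e he e' he' h
      rcases mem_insert.1 he with rfl | he1 <;> rcases mem_insert.1 he' with rfl | he1'
      · rfl
      · exact absurd h.symm (hy' _ he1')
      · exact absurd h (hy' _ he1)
      · exact hM.injr e he1 e' he1' h
  have := hmax _ (fun e he => mem_product.2 ⟨hM'.left e he, hM'.right e he⟩) hM'
  rw [card_insert_of_notMem hnot] at this
  omega

/-- No `q` pairwise anticomplete sets of size at least `L` inside the blocks `S i`. -/
def NoAnti (G : SimpleGraph V) (S : V → Finset V) (q L : ℕ) : Prop :=
  ∀ (I : Finset V) (T : V → Finset V), #I = q → (∀ i ∈ I, T i ⊆ S i) →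
    (∀ i ∈ I, ∀ j ∈ I, i ≠ j → Anti G (T i) (T j)) → ∃ i ∈ I, #(T i) < L

theorem NoAnti.mono {S S' : V → Finset V} {q L : ℕ} (h : NoAnti G S q L)
    (hS : ∀ i, S' i ⊆ S i) : NoAnti G S' q L :=
  fun I T hI hT hA => h I T hI (fun i hi => (hT i hi).trans (hS i)) hA

/-- A family of blocks `S i`, each attached to its own apex `i`, with few edges
between different blocks. -/
structure Sys (G : SimpleGraph V) (I : Finset V) (S : V → Finset V) (lam : ℕ) : Prop where
  adj : ∀ i ∈ I, ∀ s ∈ S i, G.Adj i s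
  na : ∀ i ∈ I, ∀ j ∈ I, ¬ G.Adj i j
  naS : ∀ i ∈ I, ∀ j ∈ I, i ≠ j → ∀ s ∈ S j, ¬ G.Adj i s
  cross : ∀ i ∈ I, ∀ j ∈ I, i ≠ j → ∀ s ∈ S j, #(nb G (S i) s) ≤ lam

variable {I : Finset V} {S : V → Finset V} {lam : ℕ}

theorem Sys.mono (h : Sys G I S lam) {J : Finset V} (hJ : J ⊆ I) {S' : V → Finset V}
    (hS : ∀ i ∈ J, S' i ⊆ S i) {lam' : ℕ} (hl : lam ≤ lam') : Sys G J S' lam' where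
  adj i hi s hs := h.adj i (hJ hi) s (hS i hi hs)
  na i hi j hj := h.na i (hJ hi) j (hJ hj)
  naS i hi j hj hij s hs := h.naS i (hJ hi) j (hJ hj) hij s (hS j hj hs)
  cross i hi j hj hij s hs := (card_le_card (nb_mono (hS i hi))).trans
    ((h.cross i (hJ hi) j (hJ hj) hij s (hS j hj hs)).trans hl)

theorem Sys.ne (h : Sys G I S lam) {i j s t : V} (hi : i ∈ I) (hj : j ∈ I) (hij : i ≠ j)
    (hs : s ∈ S i) (ht : t ∈ S j) : s ≠ t := by
  rintro rfl
  exact h.naS i hi j hj hij s ht (h.adj i hi s hs)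

/-- Among many blocks, some block is linked to many others. -/
theorem Sys.exists_linked (h : Sys G I S lam) {q L N k l : ℕ} (hd : NoAnti G S q L)
    (hN : ∀ i ∈ I, N ≤ #(S i)) (hq : 2 * q * l + L ≤ N) {J : Finset V} (hJ : J ⊆ I)
    (hJk : q * k ≤ #J) (hk : 0 < k) :
    ∃ c ∈ J, ∃ K ⊆ J, c ∉ K ∧ #K = k ∧ ∀ i ∈ K, Linked G (S c) (S i) l := by
  by_contra! hcon
  obtain ⟨T, hTJ, hTq, hT⟩ := exists_independent (fun i j => Linked G (S i) (S j) l)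
    (fun _ _ h => h.symm) (k - 1) q J (by
      intro c hc
      by_contra! hlt
      obtain ⟨K, hK, hKc⟩ := exists_subset_card_eq
        (s := J.filter fun x => x ≠ c ∧ Linked G (S c) (S x) l) (n := k) (by omega)
      have hK' : ∀ i ∈ K, i ∈ J ∧ i ≠ c ∧ Linked G (S c) (S i) l :=
        fun i hi => by simpa using hK hi
      obtain ⟨i, hi, hi'⟩ := hcon c hc K (fun i hi => (hK' i hi).1)
        (fun h => (hK' c h).2.1 rfl) hKc
      exact hi' (hK' i hi).2.2) (by rwa [Nat.sub_add_cancel hk])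
  have hcov : ∀ i j, ∃ X Y : Finset V, #X ≤ l ∧ #Y ≤ l ∧ (i ∈ T → j ∈ T → i ≠ j →
      ∀ x ∈ S i, ∀ y ∈ S j, x ∉ X → y ∉ Y → ¬ G.Adj x y) := by
    intro i j
    by_cases hij : i ∈ T ∧ j ∈ T ∧ i ≠ j
    · obtain ⟨X, Y, hX, hY, H⟩ := exists_cover_of_not_linked (hT i hij.1 j hij.2.1 hij.2.2)
      exact ⟨X, Y, hX, hY, fun _ _ _ => H⟩
    · exact ⟨∅, ∅, by simp, by simp, fun h1 h2 h3 => absurd ⟨h1, h2, h3⟩ hij⟩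
  choose X Y hX hY hXY using hcov
  obtain ⟨i, hi, hlt⟩ := hd T (fun i => S i \ T.biUnion fun j => X i j ∪ Y j i) hTq
    (fun _ _ => sdiff_subset) (by
    intro i hi j hj hij x hx y hy
    simp only [mem_sdiff, mem_biUnion, mem_union, not_exists, not_and, not_or] at hx hy
    exact ⟨h.ne (hJ (hTJ hi)) (hJ (hTJ hj)) hij hx.1 hy.1,
      hXY i j hi hj hij x hx.1 y hy.1 (hx.2 j hj).1 (hy.2 i hi).2⟩)
  have h1 : #(T.biUnion fun j => X i j ∪ Y j i) ≤ #T * (2 * l) :=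
    card_biUnion_le_card_mul _ _ _ fun j _ => (card_union_le _ _).trans
      (by have := hX i j; have := hY j i; omega)
  have h2 := le_card_sdiff (T.biUnion fun j => X i j ∪ Y j i) (S i)
  have h3 := hN i (hJ (hTJ hi))
  rw [hTq] at h1
  have h4 : q * (2 * l) = 2 * q * l := by ring
  omega

/-- Fair division: disjoint sets of positive measure for several measures with small atoms. -/
theorem exists_fair_division {α : Type*} (μ : V → α → ℕ) (a b : ℕ) :
    ∀ (p : ℕ) (P : Finset V) (X : Finset α), #P = p → (∀ i ∈ P, ∀ x ∈ X, μ i x ≤ a) →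
      (∀ i ∈ P, p * (b + a) ≤ ∑ x ∈ X, μ i x) →
      ∃ F : V → Finset α, (∀ i ∈ P, F i ⊆ X) ∧ (∀ i ∈ P, ∀ j ∈ P, i ≠ j → Disjoint (F i) (F j)) ∧
        ∀ i ∈ P, b ≤ ∑ x ∈ F i, μ i x := by
  intro p
  induction p with
  | zero =>
    intro P X hP _ _
    rw [card_eq_zero] at hP
    subst hP
    exact ⟨fun _ => ∅, by simp, by simp, by simp⟩
  | succ p ih =>
    intro P X hP ha hb
    obtain ⟨i0, hi0⟩ : P.Nonempty := by rw [← Finset.card_pos]; omega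
    obtain ⟨E, hE, hmin⟩ := exists_min_image
      (X.powerset.filter fun E => ∃ i ∈ P, b ≤ ∑ x ∈ E, μ i x) card
      ⟨X, by
        simp only [mem_filter, mem_powerset, subset_rfl, true_and]
        refine ⟨i0, hi0, le_trans ?_ (hb i0 hi0)⟩
        nlinarith⟩
    simp only [mem_filter, mem_powerset, and_imp, forall_exists_index] at hE hmin
    obtain ⟨hEX, i, hi, hEi⟩ := hE
    have hsmall : ∀ j ∈ P, ∑ x ∈ E, μ j x ≤ b + a := by
      intro j hj
      rcases E.eq_empty_or_nonempty with rfl | ⟨x, hx⟩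
      · simp
      · by_contra! hc
        have h1 := add_sum_erase E (μ j) hx
        have h2 := ha j hj x (hEX hx)
        have h3 := hmin (E.erase x) ((erase_subset _ _).trans hEX) j hj (by omega)
        have := card_erase_lt_of_mem hx
        omega
    obtain ⟨F, hF1, hF2, hF3⟩ := ih (P.erase i) (X \ E) (by rw [card_erase_of_mem hi]; omega)
      (fun j hj x hx => ha j (mem_of_mem_erase hj) x (mem_sdiff.1 hx).1) (by
        intro j hj
        have hj' := mem_of_mem_erase hj
        have h1 := sum_sdiff (f := μ j) hEX
        have h2 := hsmall j hj'
        have h3 := hb j hj'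
        have h4 : (p + 1) * (b + a) = p * (b + a) + (b + a) := by ring
        omega)
    refine ⟨fun j => if j = i then E else F j, ?_, ?_, ?_⟩
    · intro j hj
      by_cases hji : j = i
      · simpa [hji] using hEX
      · simpa [hji] using (hF1 j (mem_erase.2 ⟨hji, hj⟩)).trans sdiff_subset
    · have hdis : ∀ j ∈ P, j ≠ i → Disjoint (F j) E := fun j hj hji =>
        disjoint_of_subset_left (hF1 j (mem_erase.2 ⟨hji, hj⟩)) sdiff_disjoint
      intro j hj k hk hjk
      by_cases hji : j = i <;> by_cases hki : k = i
      · exact absurd (hji.trans hki.symm) hjk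
      · simpa [hji, hki] using (hdis k hk hki).symm
      · simpa [hji, hki] using hdis j hj hji
      · simpa [hji, hki] using hF2 j (mem_erase.2 ⟨hji, hj⟩) k (mem_erase.2 ⟨hki, hk⟩) hjk
    · intro j hj
      by_cases hji : j = i
      · simpa [hji] using hEi
      · simpa [hji] using hF3 j (mem_erase.2 ⟨hji, hj⟩)

/-- If neighbourhoods in the block of `c` propagate along edges between the blocks of `K`,
then there are many large pairwise anticomplete sets. -/
theorem Sys.false_of_propagation (h : Sys G I S lam) {q L l : ℕ} (hd : NoAnti G S q L)
    {c : V} (hc : c ∈ I) {K : Finset V} (hK : K ⊆ I) (hcK : c ∉ K) (hKq : #K = q)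
    (hlink : ∀ i ∈ K, Linked G (S c) (S i) l) (hl : q * (L + lam) ≤ l)
    (hprop : ∀ i ∈ K, ∀ j ∈ K, i ≠ j → ∀ s ∈ S i, ∀ t ∈ S j, ∀ u ∈ S c,
      G.Adj s t → G.Adj u s → G.Adj u t) : False := by
  set Y : V → Finset V := fun i => (S i).filter fun s => (nb G (S c) s).Nonempty with hY
  set X : Finset (Finset V) := (S c).powerset with hX
  set μ : V → Finset V → ℕ := fun i F => #((Y i).filter fun s => nb G (S c) s = F) with hμ
  have hne : ∀ i ∈ K, c ≠ i := fun i hi h => hcK (h ▸ hi)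
  have hsum : ∀ i, ∀ E ⊆ X, ∑ F ∈ E, μ i F = #((Y i).filter fun s => nb G (S c) s ∈ E) := by
    intro i E _
    symm
    refine (card_eq_sum_card_fiberwise (f := fun s => nb G (S c) s) (t := E)
      (fun s hs => (mem_filter.1 hs).2)).trans ?_
    refine sum_congr rfl fun F hF => ?_
    simp only [hμ, filter_filter]
    congr 1
    ext s
    simp only [mem_filter]
    constructor
    · rintro ⟨h1, -, h3⟩; exact ⟨h1, h3⟩
    · rintro ⟨h1, rfl⟩; exact ⟨h1, hF, rfl⟩
  obtain ⟨F, hF1, hF2, hF3⟩ := exists_fair_division μ lam L q K X hKq (by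
      intro i hi F _
      rcases F.eq_empty_or_nonempty with rfl | ⟨u, hu⟩
      · have : (Y i).filter (fun s => nb G (S c) s = ∅) = ∅ := by
          rw [filter_eq_empty_iff]
          intro s hs
          exact (mem_filter.1 hs).2.ne_empty
        simp [hμ, this]
      by_cases huc : u ∈ S c
      · refine le_trans (card_le_card ?_) (h.cross i (hK hi) c hc (hne i hi).symm u huc)
        intro s hs
        simp only [mem_filter, hY] at hs
        rw [mem_nb]
        have : u ∈ nb G (S c) s := hs.2 ▸ hu
        exact ⟨hs.1.1, (mem_nb.1 this).2.symm⟩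
      · have : (Y i).filter (fun s => nb G (S c) s = F) = ∅ := by
          rw [filter_eq_empty_iff]
          rintro s hs rfl
          exact huc (mem_nb.1 hu).1
        simp [hμ, this]) (by
      intro i hi
      rw [hsum i X subset_rfl]
      refine hl.trans ?_
      obtain ⟨M, hM, hMc⟩ := hlink i hi
      refine hMc.trans (card_le_card_of_injOn Prod.snd ?_ fun e he e' he' => hM.injr e he e' he')
      intro e he
      simp only [mem_coe, hY, mem_filter, hX, mem_powerset]
      exact ⟨⟨hM.right e he, e.1, mem_nb.2 ⟨hM.left e he, (hM.adj e he).symm⟩⟩, nb_subset⟩)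
  obtain ⟨i, hi, hlt⟩ := hd K (fun i => (Y i).filter fun s => nb G (S c) s ∈ F i) hKq
    (fun _ _ => (filter_subset _ _).trans (filter_subset _ _)) (by
    intro i hi j hj hij s hs t ht
    simp only [mem_filter, hY] at hs ht
    refine ⟨h.ne (hK hi) (hK hj) hij hs.1.1 ht.1.1, fun hst => ?_⟩
    have : nb G (S c) s = nb G (S c) t := by
      ext u
      simp only [mem_nb]
      refine and_congr_right fun hu => ?_
      rw [G.adj_comm s, G.adj_comm t]
      exact ⟨hprop i hi j hj hij s hs.1.1 t ht.1.1 u hu hst,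
        hprop j hj i hi hij.symm t ht.1.1 s hs.1.1 u hu hst.symm⟩
    exact Finset.disjoint_left.1 (hF2 i hi j hj hij) hs.2 (this ▸ ht.2))
  have := hF3 i hi
  rw [hsum i _ (hF1 i hi)] at this
  omega

/-- Sparse blocks. -/
theorem Sys.false_of_sparse (h : Sys G I S lam) (hG : NoC7 G) {q L N l : ℕ} (hd : NoAnti G S q L)
    (hq0 : 0 < q) (hI : q * q ≤ #I) (hN : ∀ i ∈ I, N ≤ #(S i)) (hq : 2 * q * l + L ≤ N)
    (hin : ∀ i ∈ I, ∀ s ∈ S i, #(nb G (S i) s) ≤ lam)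
    (hl : q * (L + lam) ≤ l) (hl6 : 6 * lam < l) : False := by
  obtain ⟨c, hc, K, hK, hcK, hKq, hlink⟩ := h.exists_linked hd hN hq subset_rfl hI hq0
  have hdeg : ∀ i ∈ I, ∀ j ∈ I, ∀ s ∈ S j, #(nb G (S i) s) ≤ lam := by
    intro i hi j hj s hs
    by_cases hij : i = j
    · subst hij; exact hin i hi s hs
    · exact h.cross i hi j hj hij s hs
  refine h.false_of_propagation hd hc hK hcK hKq hlink hl ?_
  intro k hk j hj hkj sk hsk sj hsj si hsi hkj' hki'
  have hck : c ≠ k := fun h => hcK (h ▸ hk)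
  have hcj : c ≠ j := fun h => hcK (h ▸ hj)
  replace hk := hK hk
  by_contra hij
  obtain ⟨M, hM, hMc⟩ := hlink j hj
  replace hj := hK hj
  have hcard : ∀ i ∈ I, #(nb G (S i) si ∪ nb G (S i) sk ∪ nb G (S i) sj) ≤ 3 * lam := by
    intro i hi
    have h1 := card_union_le (nb G (S i) si ∪ nb G (S i) sk) (nb G (S i) sj)
    have h2 := card_union_le (nb G (S i) si) (nb G (S i) sk)
    have h3 := hdeg i hi c hc si hsi
    have h4 := hdeg i hi k hk sk hsk
    have h5 := hdeg i hi j hj sj hsj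
    omega
  obtain ⟨⟨y, z⟩, he, hy, hz⟩ := hM.exists_avoiding _ _
    (show #(nb G (S c) si ∪ nb G (S c) sk ∪ nb G (S c) sj) +
      #(nb G (S j) si ∪ nb G (S j) sk ∪ nb G (S j) sj) < #M by
      have := hcard c hc; have := hcard j hj; omega)
  have hyc : y ∈ S c := hM.left _ he
  have hzj : z ∈ S j := hM.right _ he
  have hyz : G.Adj y z := hM.adj _ he
  simp only [mem_union, mem_nb, hyc, hzj, true_and, not_or] at hy hz
  exact hG.elim (a := c) (b := si) (c := sk) (d := sj) (e := j) (f := z) (g := y)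
    (h.adj c hc si hsi) hki' hkj' (h.adj j hj sj hsj).symm (h.adj j hj z hzj) hyz.symm
    (h.adj c hc y hyc).symm (h.naS c hc k hk hck sk hsk) (h.naS c hc j hj hcj sj hsj)
    (h.na c hc j hj) (h.naS c hc j hj hcj z hzj) hij
    (fun e => h.naS j hj c hc hcj.symm si hsi e.symm) hz.1.1 hy.1.1
    (fun e => h.naS j hj k hk hkj.symm sk hsk e.symm) hz.1.2 hy.1.2 hz.2 hy.2
    (h.naS j hj c hc hcj.symm y hyc)

/-- Dense blocks. -/
theorem Sys.false_of_dense (h : Sys G I S lam) (hG : NoC7 G) {q L N l : ℕ} (hd : NoAnti G S q L)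
    (hq0 : 0 < q) (hI : q * (q * q) ≤ #I) (hN : ∀ i ∈ I, N ≤ #(S i)) (hq : 2 * q * l + L ≤ N)
    (hin : ∀ i ∈ I, ∀ s ∈ S i, #(S i \ nb G (S i) s) ≤ lam)
    (hl : q * (L + lam) ≤ l) (hl6 : 10 * lam < l) : False := by
  obtain ⟨j, hj, I1, hI1, hjI1, hI1c, hlinkj⟩ :=
    h.exists_linked hd hN hq subset_rfl hI (by positivity)
  obtain ⟨c, hcI1, K, hKI1, hcK, hKq, hlink⟩ := h.exists_linked hd hN hq hI1 hI1c.ge hq0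
  have hc := hI1 hcI1
  have hK := hKI1.trans hI1
  refine h.false_of_propagation hd hc hK hcK hKq hlink hl ?_
  intro k hk l' hl' hkl sk hsk sl hsl si hsi hkl' hki
  by_contra hil
  have hck : c ≠ k := fun h => hcK (h ▸ hk)
  have hcl : c ≠ l' := fun h => hcK (h ▸ hl')
  have hjk : j ≠ k := fun h => hjI1 (h ▸ hKI1 hk)
  have hjl : j ≠ l' := fun h => hjI1 (h ▸ hKI1 hl')
  have hjc : j ≠ c := fun h => hjI1 (h ▸ hcI1)
  obtain ⟨M, hM, hMc⟩ := hlinkj c hcI1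
  obtain ⟨M', hM', hMc'⟩ := hlinkj l' (hKI1 hl')
  replace hk := hK hk
  replace hl' := hK hl'
  have u3 : ∀ A B C : Finset V, #(A ∪ B ∪ C) ≤ #A + #B + #C := fun A B C =>
    (card_union_le _ _).trans (by gcongr; exact card_union_le _ _)
  have u5 : ∀ A B C D E : Finset V, #(A ∪ B ∪ C ∪ D ∪ E) ≤ #A + #B + #C + #D + #E :=
    fun A B C D E => (u3 _ _ _).trans (by gcongr; exact u3 _ _ _)
  obtain ⟨⟨yj, yi⟩, he, hyj, hyi⟩ := hM.exists_avoiding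
    (nb G (S j) sk ∪ nb G (S j) sl ∪ nb G (S j) si)
    ((S c \ nb G (S c) si) ∪ nb G (S c) sk ∪ nb G (S c) sl) (by
      have h1 := u3 (nb G (S j) sk) (nb G (S j) sl) (nb G (S j) si)
      have h2 := u3 (S c \ nb G (S c) si) (nb G (S c) sk) (nb G (S c) sl)
      have := h.cross j hj k hk hjk sk hsk
      have := h.cross j hj l' hl' hjl sl hsl
      have := h.cross j hj c hc hjc si hsi
      have := hin c hc si hsi
      have := h.cross c hc k hk hck sk hsk
      have := h.cross c hc l' hl' hcl sl hsl
      omega)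
  have hyjm : yj ∈ S j := hM.left _ he
  have hyim : yi ∈ S c := hM.right _ he
  have hyy : G.Adj yj yi := hM.adj _ he
  simp only [mem_union, mem_sdiff, mem_nb, hyjm, hyim, true_and, not_or, not_not] at hyj hyi
  obtain ⟨⟨zj, zl⟩, he', hzj, hzl⟩ := hM'.exists_avoiding
    ((S j \ nb G (S j) yj) ∪ nb G (S j) sk ∪ nb G (S j) si ∪ nb G (S j) yi ∪ nb G (S j) sl)
    ((S l' \ nb G (S l') sl) ∪ nb G (S l') sk ∪ nb G (S l') si ∪ nb G (S l') yi ∪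
      nb G (S l') yj) (by
      have h1 := u5 (S j \ nb G (S j) yj) (nb G (S j) sk) (nb G (S j) si) (nb G (S j) yi)
        (nb G (S j) sl)
      have h2 := u5 (S l' \ nb G (S l') sl) (nb G (S l') sk) (nb G (S l') si) (nb G (S l') yi)
        (nb G (S l') yj)
      have := hin j hj yj hyjm
      have := h.cross j hj k hk hjk sk hsk
      have := h.cross j hj c hc hjc si hsi
      have := h.cross j hj c hc hjc yi hyim
      have := h.cross j hj l' hl' hjl sl hsl
      have := hin l' hl' sl hsl
      have := h.cross l' hl' k hk hkl.symm sk hsk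
      have := h.cross l' hl' c hc hcl.symm si hsi
      have := h.cross l' hl' c hc hcl.symm yi hyim
      have := h.cross l' hl' j hj hjl.symm yj hyjm
      omega)
  have hzjm : zj ∈ S j := hM'.left _ he'
  have hzlm : zl ∈ S l' := hM'.right _ he'
  have hzz : G.Adj zj zl := hM'.adj _ he'
  simp only [mem_union, mem_sdiff, mem_nb, hzjm, hzlm, true_and, not_or, not_not] at hzj hzl
  obtain ⟨⟨hyj1, hyj2⟩, hyj3⟩ := hyj
  obtain ⟨⟨hyi1, hyi2⟩, hyi3⟩ := hyi
  obtain ⟨⟨⟨⟨hzj1, hzj2⟩, hzj3⟩, hzj4⟩, hzj5⟩ := hzj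
  obtain ⟨⟨⟨⟨hzl1, hzl2⟩, hzl3⟩, hzl4⟩, hzl5⟩ := hzl
  exact hG.elim (a := sk) (b := si) (c := yi) (d := yj) (e := zj) (f := zl) (g := sl)
    hki.symm hyi1 hyy.symm hzj1 hzz hzl1.symm hkl'.symm
    hyi2 hyj1 hzj2 hzl2 hyj3 hzj3 hzl3 hil hzj4 hzl4 (fun e => hyi3 e.symm) hzl5
    (fun e => hyj2 e.symm) (fun e => hzj5 e.symm)
end

section
open Finset Classical
variable {V : Type*} {G : SimpleGraph V} {I : Finset V} {S : V → Finset V} {lam : ℕ}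

/-- Many large subsets of a small set cannot be almost disjoint. -/
theorem exists_large_inter {K : Finset V} {Y : V → Finset V} {A : Finset V} {N P l w : ℕ}
    (hA : #A ≤ N) (hKP : #K = P) (hY : ∀ i ∈ K, Y i ⊆ A) (hYl : ∀ i ∈ K, l ≤ #(Y i))
    (hP : N + P * (P * w) < P * l) : ∃ i ∈ K, ∃ j ∈ K, i ≠ j ∧ w ≤ #(Y i ∩ Y j) := by
  by_contra! hc
  set Z : V → Finset V := fun i => Y i \ (K.erase i).biUnion fun j => Y i ∩ Y j with hZ
  have hZd : ∀ i ∈ K, ∀ j ∈ K, i ≠ j → Disjoint (Z i) (Z j) := by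
    intro i hi j hj hij
    rw [Finset.disjoint_left]
    intro x hx hx'
    simp only [hZ, mem_sdiff, mem_biUnion, mem_erase, mem_inter, not_exists, not_and] at hx hx'
    exact hx.2 j ⟨hij.symm, hj⟩ hx.1 hx'.1
  have h1 : #(K.biUnion Z) = ∑ i ∈ K, #(Z i) := card_biUnion fun i hi j hj => hZd i hi j hj
  have h2 : #(K.biUnion Z) ≤ N := by
    refine (card_le_card (biUnion_subset.2 fun i hi => ?_)).trans hA
    exact sdiff_subset.trans (hY i hi)
  have h3 : ∀ i ∈ K, l ≤ #(Z i) + P * w := by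
    intro i hi
    have h4 := le_card_sdiff ((K.erase i).biUnion fun j => Y i ∩ Y j) (Y i)
    have h5 : #((K.erase i).biUnion fun j => Y i ∩ Y j) ≤ #(K.erase i) * w :=
      card_biUnion_le_card_mul _ _ _ fun j hj =>
        (hc i hi j (mem_of_mem_erase hj) (ne_of_mem_erase hj).symm).le
    have h6 : #(K.erase i) * w ≤ P * w := by
      gcongr; rw [← hKP]; exact card_le_card (erase_subset _ _)
    have := hYl i hi
    have : #(Z i) = #(Y i \ (K.erase i).biUnion fun j => Y i ∩ Y j) := rfl
    omega
  have h4 : ∑ i ∈ K, l ≤ ∑ i ∈ K, (#(Z i) + P * w) := sum_le_sum h3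
  rw [sum_add_distrib, ← h1] at h4
  simp only [sum_const, smul_eq_mul, hKP] at h4
  omega

theorem card_nb_image_le {H : SimpleGraph V} {φ : V → V} {U : Finset V} {u : V}
    (hH : ∀ x ∈ U, G.Adj (φ u) (φ x) → H.Adj u x) :
    #(nb G (U.image φ) (φ u)) ≤ #(nb H U u) := by
  refine (card_le_card (t := (nb H U u).image φ) ?_).trans card_image_le
  intro y hy
  rw [mem_nb] at hy
  obtain ⟨x, hx, rfl⟩ := mem_image.1 hy.1
  exact mem_image_of_mem _ (mem_nb.2 ⟨hx, hH x hx hy.2⟩)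

theorem card_union_seven_le (A₁ A₂ A₃ A₄ A₅ A₆ A₇ : Finset V) :
    #(A₁ ∪ A₂ ∪ A₃ ∪ A₄ ∪ A₅ ∪ A₆ ∪ A₇) ≤ #A₁ + #A₂ + #A₃ + #A₄ + #A₅ + #A₆ + #A₇ := by
  have h1 := card_union_le A₁ A₂
  have h2 := card_union_le (A₁ ∪ A₂) A₃
  have h3 := card_union_le (A₁ ∪ A₂ ∪ A₃) A₄
  have h4 := card_union_le (A₁ ∪ A₂ ∪ A₃ ∪ A₄) A₅
  have h5 := card_union_le (A₁ ∪ A₂ ∪ A₃ ∪ A₄ ∪ A₅) A₆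
  have h6 := card_union_le (A₁ ∪ A₂ ∪ A₃ ∪ A₄ ∪ A₅ ∪ A₆) A₇
  omega

/-- Blocks in which no large subset is very sparse or very dense. -/
theorem Sys.false_of_intermediate (h : Sys G I S lam) (hG : NoC7 G)
    {q L N l n p P w s r : ℕ} (hd : NoAnti G S q L)
    (hI : q * P ≤ #I) (hP0 : 0 < P) (hN : ∀ i ∈ I, #(S i) = N) (hq : 2 * q * l + L ≤ N)
    (hdense : ∀ i ∈ I, ∀ T ⊆ S i, n ≤ #T → (∃ x ∈ T, #T ≤ p * #(nb G T x)) ∧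
      ∃ x ∈ T, #T ≤ p * #(nb Gᶜ T x))
    (hP : N + P * (P * w) < P * l) (hp : 0 < p) (hs0 : 0 < s) (hsr : (2 * s) ^ 3 ≤ r)
    (hs : (N : ℝ) * (1 - 1 / p) ^ s < n) (hw : 32 * (r + 1) ^ 2 * n ≤ w)
    (hwc : 4 * r ^ 2 * (6 * lam + 1) ≤ w) : False := by
  obtain ⟨c, hc, K, hKI, hcK, hKP, hlink⟩ :=
    h.exists_linked hd (fun i hi => (hN i hi).ge) hq subset_rfl hI hP0
  have hlink' : ∀ i, ∃ M : Finset (V × V), i ∈ K → Matching G (S c) (S i) M ∧ l ≤ #M := by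
    intro i
    by_cases hi : i ∈ K
    · obtain ⟨M, hM⟩ := hlink i hi
      exact ⟨M, fun _ => hM⟩
    · exact ⟨∅, fun h => absurd h hi⟩
  choose Mt hMt using hlink'
  obtain ⟨a, ha, b, hb, hab, hwab⟩ := exists_large_inter (K := K) (A := S c)
    (Y := fun i => (Mt i).image Prod.fst) (hN c hc).le hKP
    (fun i hi x hx => by
      obtain ⟨e, he, rfl⟩ := mem_image.1 hx
      exact (hMt i hi).1.left e he)
    (fun i hi => by
      rw [card_image_of_injOn fun e he e' he' => (hMt i hi).1.injl e he e' he']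
      exact (hMt i hi).2) hP
  have hφ : ∀ i y, ∃ z, y ∈ (Mt i).image Prod.fst → (y, z) ∈ Mt i := by
    intro i y
    by_cases hy : y ∈ (Mt i).image Prod.fst
    · obtain ⟨⟨y', z⟩, he, rfl⟩ := mem_image.1 hy
      exact ⟨z, fun _ => he⟩
    · exact ⟨y, fun h => absurd h hy⟩
  choose Φ hΦ using hφ
  set M0 := (Mt a).image Prod.fst ∩ (Mt b).image Prod.fst with hM0
  set φ := Φ a
  set ψ := Φ b
  have eφ : ∀ y ∈ M0, (y, φ y) ∈ Mt a := fun y hy => hΦ a y (mem_inter.1 hy).1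
  have eψ : ∀ y ∈ M0, (y, ψ y) ∈ Mt b := fun y hy => hΦ b y (mem_inter.1 hy).2
  obtain ⟨hMa, -⟩ := hMt a ha
  obtain ⟨hMb, -⟩ := hMt b hb
  have hca : c ≠ a := fun h => hcK (h ▸ ha)
  have hcb : c ≠ b := fun h => hcK (h ▸ hb)
  replace ha := hKI ha
  replace hb := hKI hb
  have hSc : ∀ y ∈ M0, y ∈ S c := fun y hy => hMa.left _ (eφ y hy)
  have hSa : ∀ y ∈ M0, φ y ∈ S a := fun y hy => hMa.right _ (eφ y hy)
  have hSb : ∀ y ∈ M0, ψ y ∈ S b := fun y hy => hMb.right _ (eψ y hy)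
  have iφ : ∀ y ∈ M0, ∀ y' ∈ M0, φ y = φ y' → y = y' := fun y hy y' hy' e =>
    congrArg Prod.fst (hMa.injr _ (eφ y hy) _ (eφ y' hy') e)
  have iψ : ∀ y ∈ M0, ∀ y' ∈ M0, ψ y = ψ y' → y = y' := fun y hy y' hy' e =>
    congrArg Prod.fst (hMb.injr _ (eψ y hy) _ (eψ y' hy') e)
  -- keep the larger part according to the edges between `φ y` and `ψ y`
  obtain ⟨M, hMM0, hMw, hdiag⟩ : ∃ M ⊆ M0, w ≤ 2 * #M ∧
      ((∀ y ∈ M, G.Adj (φ y) (ψ y)) ∨ ∀ y ∈ M, ¬ G.Adj (φ y) (ψ y)) := by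
    have hsplit := card_filter_add_card_filter_not (s := M0) (fun y => G.Adj (φ y) (ψ y))
    by_cases hh : w ≤ 2 * #(M0.filter fun y => G.Adj (φ y) (ψ y))
    · exact ⟨_, filter_subset _ _, hh, Or.inl fun y hy => (mem_filter.1 hy).2⟩
    · exact ⟨M0.filter fun y => ¬ G.Adj (φ y) (ψ y), filter_subset _ _, by omega,
        Or.inr fun y hy => (mem_filter.1 hy).2⟩
  have hMN : #M ≤ N := by
    rw [← hN c hc]; exact card_le_card fun y hy => hSc y (hMM0 hy)
  set conf : V → V → Prop := fun x y => x = y ∨ G.Adj x (φ y) ∨ G.Adj y (φ x) ∨ G.Adj x (ψ y) ∨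
    G.Adj y (ψ x) ∨ G.Adj (φ x) (ψ y) ∨ G.Adj (φ y) (ψ x) with hconf
  have bound : ∀ (ξ : V → V) (i j : V), i ∈ I → j ∈ I → i ≠ j → (∀ y ∈ M0, ξ y ∈ S i) →
      (∀ y ∈ M0, ∀ y' ∈ M0, ξ y = ξ y' → y = y') → ∀ x ∈ S j,
      #(M.filter fun y => G.Adj x (ξ y)) ≤ lam := by
    intro ξ i j hi hj hij h1 h2 x hx
    refine (card_le_card_of_injOn ξ ?_ ?_).trans (h.cross i hi j hj hij x hx)
    · intro y hy
      obtain ⟨hy1, hy2⟩ := mem_filter.1 hy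
      exact mem_nb.2 ⟨h1 y (hMM0 hy1), hy2⟩
    · intro y hy y' hy' e
      exact h2 y (hMM0 (mem_filter.1 hy).1) y' (hMM0 (mem_filter.1 hy').1) e
  have hcdeg : ∀ x ∈ M, #(M.filter (conf x)) ≤ 6 * lam + 1 := by
    intro x hx
    have hx0 := hMM0 hx
    have hsub : M.filter (conf x) ⊆ {x} ∪ (M.filter fun y => G.Adj x (φ y)) ∪
        (M.filter fun y => G.Adj (φ x) y) ∪ (M.filter fun y => G.Adj x (ψ y)) ∪
        (M.filter fun y => G.Adj (ψ x) y) ∪ (M.filter fun y => G.Adj (φ x) (ψ y)) ∪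
        (M.filter fun y => G.Adj (ψ x) (φ y)) := by
      intro y hy
      obtain ⟨hyM, hy⟩ := mem_filter.1 hy
      simp only [hconf] at hy
      simp only [mem_union, mem_singleton, mem_filter, hyM, true_and]
      rw [G.adj_comm (φ x) y, G.adj_comm (ψ x) y, G.adj_comm (ψ x) (φ y), eq_comm (a := y)]
      tauto
    have b1 := bound φ a c ha hc hca.symm hSa iφ x (hSc x hx0)
    have b2 := bound id c a hc ha hca hSc (fun _ _ _ _ e => e) (φ x) (hSa x hx0)
    have b3 := bound ψ b c hb hc hcb.symm hSb iψ x (hSc x hx0)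
    have b4 := bound id c b hc hb hcb hSc (fun _ _ _ _ e => e) (ψ x) (hSb x hx0)
    have b5 := bound ψ b a hb ha hab.symm hSb iψ (φ x) (hSa x hx0)
    have b6 := bound φ a b ha hb hab hSa iφ (ψ x) (hSb x hx0)
    simp only [id] at b2 b4
    have hu := (card_le_card hsub).trans (card_union_seven_le _ _ _ _ _ _ _)
    rw [card_singleton] at hu
    omega
  obtain ⟨W, hWM, hWr, hWc, hWs⟩ := exists_sample (n := n) (p := p) (s := s) (r := r)
    (c := 6 * lam + 1) M ![G, Gᶜ, G.comap φ, (G.comap φ)ᶜ] conf (fun w => Or.inl rfl) hp hs0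
    (by nlinarith [pow_pos hs0 3, Nat.le_self_pow (n := 3) (by norm_num) (2 * s)])
    (by
      have key : ∀ U ⊆ M, n ≤ #U → (∃ x ∈ U, #U ≤ p * #(nb (G.comap φ) U x)) ∧
          ∃ x ∈ U, #U ≤ p * #(nb (G.comap φ)ᶜ U x) := by
        intro U hU hnU
        have hcard : #(U.image φ) = #U := card_image_of_injOn fun y hy y' hy' e =>
          iφ y (hMM0 (hU hy)) y' (hMM0 (hU hy')) e
        obtain ⟨⟨x, hx, hxd⟩, ⟨y, hy, hyd⟩⟩ := hdense a ha (U.image φ) (by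
          intro z hz
          obtain ⟨u, hu, rfl⟩ := mem_image.1 hz
          exact hSa u (hMM0 (hU hu))) (by rw [hcard]; exact hnU)
        obtain ⟨u, hu, rfl⟩ := mem_image.1 hx
        obtain ⟨v, hv, rfl⟩ := mem_image.1 hy
        rw [hcard] at hxd hyd
        refine ⟨⟨u, hu, hxd.trans ?_⟩, ⟨v, hv, hyd.trans ?_⟩⟩
        · exact Nat.mul_le_mul_left _
            (card_nb_image_le (G := G) (H := G.comap φ) fun x hx e => e)
        · refine Nat.mul_le_mul_left _
            (card_nb_image_le (G := Gᶜ) (H := (G.comap φ)ᶜ) fun x hx e => ?_)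
          rw [compl_adj] at e ⊢
          exact ⟨fun h => e.1 (h ▸ rfl), e.2⟩
      have key0 : ∀ U ⊆ M, n ≤ #U → (∃ x ∈ U, #U ≤ p * #(nb G U x)) ∧
          ∃ x ∈ U, #U ≤ p * #(nb Gᶜ U x) := fun U hU =>
        hdense c hc U fun y hy => hSc y (hMM0 (hU hy))
      intro k U hU hnU
      fin_cases k
      · exact (key0 U hU hnU).1
      · exact (key0 U hU hnU).2
      · exact (key U hU hnU).1
      · exact (key U hU hnU).2)
    (by
      refine lt_of_le_of_lt ?_ hs
      have hp1 : (0 : ℝ) ≤ 1 - 1 / p := by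
        have : (1 : ℝ) ≤ p := by exact_mod_cast hp
        rw [sub_nonneg]; exact div_le_one_of_le₀ this (by positivity)
      have : (#M : ℝ) ≤ N := by exact_mod_cast hMN
      gcongr)
    (by nlinarith) (fun x hx => by convert hcdeg x hx) (by nlinarith)
  have hW0 : W ⊆ M0 := hWM.trans hMM0
  have hT : Triples G W φ ψ a b := by
    have hcf : ∀ x ∈ W, ∀ y ∈ W, x ≠ y → ¬ G.Adj x (φ y) ∧ ¬ G.Adj x (ψ y) ∧
        ¬ G.Adj (φ x) (ψ y) := by
      intro x hx y hy hxy
      have := hWc x hx y hy hxy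
      simp only [hconf, not_or] at this
      tauto
    exact {
      adjφ := fun x hx => hMa.adj _ (eφ x (hW0 hx))
      adjψ := fun x hx => hMb.adj _ (eψ x (hW0 hx))
      naφ := fun x hx y hy hxy => (hcf x hx y hy hxy).1
      naψ := fun x hx y hy hxy => (hcf x hx y hy hxy).2.1
      naφψ := fun x hx y hy hxy => (hcf x hx y hy hxy).2.2
      aφ := fun x hx => h.adj a ha _ (hSa x (hW0 hx))
      bψ := fun x hx => h.adj b hb _ (hSb x (hW0 hx))
      nA := fun x hx => h.naS a ha c hc hca.symm x (hSc x (hW0 hx))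
      nB := fun x hx => h.naS b hb c hc hcb.symm x (hSc x (hW0 hx))
      naψ' := fun x hx => h.naS a ha b hb hab _ (hSb x (hW0 hx))
      nbφ' := fun x hx => h.naS b hb a ha hab.symm _ (hSa x (hW0 hx)) }
  rcases hdiag with hdiag | hdiag
  · exact hT.false_of_diag hG (fun x hx => hdiag x (hWM hx)) (t := 2 * s) (by omega)
      (by rw [hWr]; exact hsr) (hWs 0) (hWs 2) (hWs 3)
  · exact hT.false_of_not_diag hG (fun x hx => hdiag x (hWM hx)) (t := 2 * s) (by omega)
      (by rw [hWr]; exact hsr) (hWs 0) (hWs 1)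
end

section
open Finset Classical
variable {V : Type*} {G : SimpleGraph V} {I : Finset V} {S : V → Finset V} {lam : ℕ}

theorem exists_pow_le_two_pow (k : ℕ) : ∃ q₀ : ℕ, ∀ q, q₀ ≤ q → q ^ k ≤ 2 ^ q := by
  have h := (isLittleO_pow_const_const_pow_of_one_lt (R := ℝ) k (r := 2) (by norm_num)).bound
    one_pos
  obtain ⟨q₀, h⟩ := Filter.eventually_atTop.1 h
  refine ⟨q₀, fun q hq => ?_⟩
  have := h q hq
  simp only [norm_pow, RCLike.norm_natCast, one_mul] at this
  have h2 : ((q ^ k : ℕ) : ℝ) ≤ ((2 ^ q : ℕ) : ℝ) := by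
    push_cast
    simpa using this
  exact_mod_cast h2

/-- Pigeonhole on the order of magnitude of the sizes. -/
theorem exists_same_scale {J : Finset V} {T : V → Finset V} {n N q k : ℕ} (hn0 : 0 < n)
    (hn : ∀ i ∈ J, n ≤ #(T i)) (hN : ∀ i ∈ J, #(T i) ≤ N) (hNn : N ≤ n * 2 ^ q)
    (hJ : (q + 1) * k ≤ #J) :
    ∃ J' ⊆ J, k ≤ #J' ∧ ∃ M, n < 2 * M ∧ ∀ i ∈ J', M ≤ #(T i) ∧ #(T i) < 2 * M := by
  have hmap : ∀ i ∈ J, Nat.log 2 #(T i) ∈ Finset.Icc (Nat.log 2 n) (Nat.log 2 n + q) := by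
    intro i hi
    rw [Finset.mem_Icc]
    refine ⟨Nat.log_mono_right (hn i hi), ?_⟩
    refine Nat.le_of_lt_succ (Nat.log_lt_of_lt_pow (by have := hn i hi; omega) ?_)
    calc #(T i) ≤ n * 2 ^ q := (hN i hi).trans hNn
      _ < 2 ^ (Nat.log 2 n + 1) * 2 ^ q := by
        gcongr
        exact Nat.lt_pow_succ_log_self (by norm_num) n
      _ = 2 ^ (Nat.log 2 n + q + 1) := by ring
  obtain ⟨y, hy, hyk⟩ := exists_le_card_fiber_of_mul_le_card_of_maps_to hmap
    ⟨Nat.log 2 n, by simp⟩ (n := k) (by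
      rw [Nat.card_Icc, show Nat.log 2 n + q + 1 - Nat.log 2 n = q + 1 by omega]; exact hJ)
  refine ⟨_, filter_subset _ _, hyk, 2 ^ y, ?_, ?_⟩
  · rw [← pow_succ']
    refine (Nat.lt_pow_succ_log_self (b := 2) (by norm_num) n).trans_le ?_
    exact Nat.pow_le_pow_right (by norm_num) (by have := (Finset.mem_Icc.1 hy).1; omega)
  · intro i hi
    obtain ⟨hiJ, rfl⟩ := mem_filter.1 hi
    have h0 : #(T i) ≠ 0 := by have := hn i hiJ; omega
    refine ⟨Nat.pow_log_le_self 2 h0, ?_⟩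
    rw [← pow_succ']
    exact Nat.lt_pow_succ_log_self (by norm_num) _

theorem card_sdiff_nb_le (T : Finset V) (x : V) : #(T \ nb G T x) ≤ #(nb Gᶜ T x) + 1 := by
  refine (card_le_card (t := insert x (nb Gᶜ T x)) ?_).trans (card_insert_le _ _)
  intro y hy
  simp only [mem_sdiff, mem_nb, not_and, mem_insert, compl_adj] at hy ⊢
  by_cases h : y = x
  · exact Or.inl h
  · exact Or.inr ⟨hy.1, fun e => h e.symm, hy.2 hy.1⟩

theorem block_arith {q L M : ℕ} (hq : 100 ≤ q) (hL : L * q ^ 4 ≤ M) (hM : q ^ 5 ≤ M) :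
    2 * q * (M / (4 * q)) + L ≤ M ∧
      q * (L + (2 * M / q ^ 4 + 1)) ≤ M / (4 * q) ∧
      10 * (2 * M / q ^ 4 + 1) < M / (4 * q) := by
  have h1 : M / (4 * q) * (4 * q) ≤ M := Nat.div_mul_le_self _ _
  have h2 : 2 * M / q ^ 4 * q ^ 4 ≤ 2 * M := Nat.div_mul_le_self _ _
  set lam := 2 * M / q ^ 4
  have hq4 : 2 ≤ q ^ 4 := by
    calc 2 ≤ q := by omega
      _ ≤ q ^ 4 := Nat.le_self_pow (by norm_num) q
  have h3 : q * (L + (lam + 1)) ≤ M / (4 * q) := by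
    rw [Nat.le_div_iff_mul_le (by omega)]
    have h4 : q ^ 2 * (q * (L + (lam + 1)) * (4 * q)) ≤ 16 * M := by
      have : q ^ 2 * (q * (L + (lam + 1)) * (4 * q)) =
        4 * (L * q ^ 4) + 4 * (lam * q ^ 4) + 4 * q ^ 4 := by ring
      have : q ^ 4 ≤ q ^ 5 := Nat.pow_le_pow_right (by omega) (by norm_num)
      omega
    have h5 : 16 * M ≤ q ^ 2 * M := by gcongr; nlinarith
    exact Nat.le_of_mul_le_mul_left (h4.trans h5) (by positivity)
  refine ⟨?_, h3, ?_⟩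
  · have : 2 * L ≤ L * q ^ 4 := by nlinarith
    have : 2 * q * (M / (4 * q)) = (M / (4 * q) * (4 * q)) / 2 := by
      rw [show M / (4 * q) * (4 * q) = 2 * q * (M / (4 * q)) * 2 by ring]; simp
    omega
  · refine lt_of_lt_of_le ?_ h3
    nlinarith

/-- Blocks containing large sparse subsets, or large dense subsets. -/
theorem Sys.false_of_extreme (h : Sys G I S lam) (hG : NoC7 G) {q L N n : ℕ}
    (hd : NoAnti G S q L) (hq : 100 ≤ q) (hq2 : q ^ 41 ≤ 2 ^ q)
    (hn0 : 0 < n) (hN : ∀ i ∈ I, #(S i) = N) (hNn : N ≤ n * q ^ 41)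
    (hlam : lam * q ^ 45 ≤ N) (hL : L * q ^ 46 ≤ N) (hNq : q ^ 47 ≤ N)
    {T : V → Finset V} (hTS : ∀ i, T i ⊆ S i) (hTn : ∀ i ∈ I, n ≤ #(T i))
    (hI : (q + 1) * q ^ 3 ≤ #I)
    (hT : (∀ i ∈ I, ∀ x ∈ T i, q ^ 4 * #(nb G (T i) x) < #(T i)) ∨
      ∀ i ∈ I, ∀ x ∈ T i, q ^ 4 * #(nb Gᶜ (T i) x) < #(T i)) : False := by
  obtain ⟨J, hJI, hJ, M, hnM, hM⟩ := exists_same_scale hn0 hTn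
    (fun i hi => (card_le_card (hTS i)).trans (hN i hi).le)
    (hNn.trans (by gcongr)) hI
  have h1 : N < 2 * M * q ^ 41 := lt_of_le_of_lt hNn (by gcongr)
  have key : ∀ a k, k ≤ 6 → a * q ^ (41 + k) ≤ N → a * q ^ k ≤ 2 * M := by
    intro a k _ ha
    rw [pow_add] at ha
    have : a * q ^ k * q ^ 41 ≤ 2 * M * q ^ 41 := by
      calc _ = a * (q ^ 41 * q ^ k) := by ring
        _ ≤ _ := ha.trans h1.le
    exact Nat.le_of_mul_le_mul_right this (by positivity)
  have hlamM := key lam 4 (by norm_num) hlam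
  have hLM : L * q ^ 4 ≤ M := by
    have := key L 5 (by norm_num) hL
    have : 2 * (L * q ^ 4) ≤ L * q ^ 5 := by
      rw [pow_succ q 4]; nlinarith [Nat.zero_le (L * q ^ 4)]
    omega
  have hMq : q ^ 5 ≤ M := by
    have := key 1 6 (by norm_num) (by simpa using hNq)
    have : 2 * q ^ 5 ≤ q ^ 6 := by
      rw [pow_succ q 5]; nlinarith [Nat.zero_le (q ^ 5)]
    omega
  obtain ⟨a1, a2, a3⟩ := block_arith hq hLM hMq
  have hq4 : 0 < q ^ 4 := by positivity
  have hs : Sys G J T (2 * M / q ^ 4 + 1) := h.mono hJI (fun i _ => hTS i) (by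
    have := (Nat.le_div_iff_mul_le hq4).2 hlamM
    omega)
  have hd' : NoAnti G T q L := hd.mono hTS
  rcases hT with hT | hT
  · refine hs.false_of_sparse hG hd' (by omega) (le_trans ?_ hJ) (fun i hi => (hM i hi).1) a1 ?_
      a2 (by omega)
    · calc q * q = q ^ 2 := by ring
        _ ≤ q ^ 3 := Nat.pow_le_pow_right (by omega) (by norm_num)
    · intro i hi x hx
      have := hT i (hJI hi) x hx
      have h2 := (hM i hi).2
      have : #(nb G (T i) x) ≤ 2 * M / q ^ 4 := by
        rw [Nat.le_div_iff_mul_le hq4, mul_comm]; omega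
      omega
  · refine hs.false_of_dense hG hd' (by omega) (le_trans ?_ hJ) (fun i hi => (hM i hi).1) a1 ?_
      a2 (by omega)
    · exact le_of_eq (by ring)
    · intro i hi x hx
      have := hT i (hJI hi) x hx
      have h2 := (hM i hi).2
      have : #(nb Gᶜ (T i) x) ≤ 2 * M / q ^ 4 := by
        rw [Nat.le_div_iff_mul_le hq4, mul_comm]; omega
      have := card_sdiff_nb_le (G := G) (T i) x
      omega

theorem sampling_bound {q N n : ℕ} (hq : 0 < q) (hq2 : q ^ 41 ≤ 2 ^ q) (hNn : N < n * q ^ 41) :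
    (N : ℝ) * (1 - 1 / ((q ^ 4 : ℕ) : ℝ)) ^ (q ^ 5) < n := by
  have hq0 : (0 : ℝ) < q := by exact_mod_cast hq
  have h1 : (1 - 1 / ((q ^ 4 : ℕ) : ℝ)) ^ (q ^ 5) ≤ Real.exp (-q) := by
    have hb : (0 : ℝ) ≤ 1 - 1 / ((q ^ 4 : ℕ) : ℝ) := by
      have : (1 : ℝ) ≤ ((q ^ 4 : ℕ) : ℝ) := by exact_mod_cast Nat.one_le_pow _ _ hq
      rw [sub_nonneg]; exact div_le_one_of_le₀ this (by positivity)
    calc _ ≤ (Real.exp (-(1 / ((q ^ 4 : ℕ) : ℝ)))) ^ (q ^ 5) := by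
          gcongr
          have := Real.add_one_le_exp (-(1 / ((q ^ 4 : ℕ) : ℝ)))
          linarith
      _ = Real.exp (-q) := by
          rw [← Real.exp_nat_mul]
          congr 1
          push_cast
          field_simp
  have h2 : (q : ℝ) ^ 41 ≤ Real.exp q := by
    calc (q : ℝ) ^ 41 ≤ 2 ^ q := by exact_mod_cast hq2
      _ ≤ (Real.exp 1) ^ q := by
          gcongr
          have := Real.add_one_le_exp (1 : ℝ)
          linarith
      _ = Real.exp q := by rw [← Real.exp_nat_mul, mul_one]
  have h3 : (N : ℝ) < n * (q : ℝ) ^ 41 := by exact_mod_cast hNn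
  calc _ ≤ (N : ℝ) * Real.exp (-q) := by gcongr
    _ < (n * (q : ℝ) ^ 41) * Real.exp (-q) := by gcongr
    _ ≤ n * Real.exp q * Real.exp (-q) := by gcongr
    _ = n := by rw [mul_assoc, ← Real.exp_add]; simp

theorem Sys.false_of_nonextreme (h : Sys G I S lam) (hG : NoC7 G) {q L N n : ℕ}
    (hd : NoAnti G S q L) (hq : 1000 ≤ q) (hq2 : q ^ 41 ≤ 2 ^ q)
    (hN : ∀ i ∈ I, #(S i) = N) (hNn : N < n * q ^ 41) (hnN : n * q ^ 41 ≤ 2 * N)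
    (hlam : lam * q ^ 45 ≤ N) (hL : L * q ^ 46 ≤ N) (hNq : q ^ 47 ≤ N)
    (hI : 8 * q ^ 2 ≤ #I)
    (hdense : ∀ i ∈ I, ∀ T ⊆ S i, n ≤ #T → (∃ x ∈ T, #T ≤ q ^ 4 * #(nb G T x)) ∧
      ∃ x ∈ T, #T ≤ q ^ 4 * #(nb Gᶜ T x)) : False := by
  have pmono : ∀ a b, a ≤ b → q ^ a ≤ q ^ b := fun a b hab => Nat.pow_le_pow_right (by omega) hab
  have hr : 8 * q ^ 15 + 1 ≤ q ^ 16 := by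
    rw [pow_succ q 15]; nlinarith [Nat.one_le_pow 15 q (by omega)]
  have hr2 : (8 * q ^ 15 + 1) ^ 2 ≤ q ^ 32 := by
    calc _ ≤ (q ^ 16) ^ 2 := Nat.pow_le_pow_left hr 2
      _ = q ^ 32 := by ring
  have h1 : N / (4 * q) * (4 * q) ≤ N := Nat.div_mul_le_self _ _
  have h1' : N < N / (4 * q) * (4 * q) + 4 * q := Nat.lt_div_mul_add (by omega)
  have h2 : N / (128 * q ^ 2) * (128 * q ^ 2) ≤ N := Nat.div_mul_le_self _ _
  have hpos : 0 < 128 * q ^ 2 := by positivity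
  refine h.false_of_intermediate hG (P := 8 * q) (l := N / (4 * q)) (w := N / (128 * q ^ 2))
    (s := q ^ 5) (r := 8 * q ^ 15) (p := q ^ 4) (n := n) hd
    (le_trans (le_of_eq (by ring)) hI) (by omega) hN ?_ hdense ?_ (by positivity) (by positivity)
    (le_of_eq (by ring)) (sampling_bound (by omega) hq2 hNn) ?_ ?_
  · have h3 : 2 * L ≤ L * q ^ 46 := by
      have : 2 ≤ q ^ 46 := le_trans (by omega) (Nat.le_self_pow (by norm_num) q)
      nlinarith
    have : 2 * q * (N / (4 * q)) = (N / (4 * q) * (4 * q)) / 2 := by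
      rw [show N / (4 * q) * (4 * q) = 2 * q * (N / (4 * q)) * 2 by ring]; simp
    omega
  · have e1 : 8 * q * (8 * q * (N / (128 * q ^ 2))) * 2 = N / (128 * q ^ 2) * (128 * q ^ 2) := by
      ring
    have e2 : 8 * q * (N / (4 * q)) = 2 * (N / (4 * q) * (4 * q)) := by ring
    have e3 : 1000 * q ≤ N := by
      calc 1000 * q ≤ q * q := by gcongr
        _ = q ^ 2 := by ring
        _ ≤ q ^ 47 := pmono _ _ (by norm_num)
        _ ≤ N := hNq
    omega
  · rw [Nat.le_div_iff_mul_le hpos]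
    have h3 : q ^ 7 * (32 * (8 * q ^ 15 + 1) ^ 2 * n * (128 * q ^ 2)) ≤ q ^ 7 * N := by
      calc q ^ 7 * (32 * (8 * q ^ 15 + 1) ^ 2 * n * (128 * q ^ 2))
          ≤ q ^ 7 * (32 * q ^ 32 * n * (128 * q ^ 2)) := by gcongr
        _ = 4096 * (n * q ^ 41) := by ring
        _ ≤ 4096 * (2 * N) := by gcongr
        _ = 8192 * N := by ring
        _ ≤ q ^ 7 * N := by
          gcongr
          calc 8192 ≤ 1000 ^ 7 := by norm_num
            _ ≤ q ^ 7 := Nat.pow_le_pow_left hq 7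
    exact Nat.le_of_mul_le_mul_left h3 (by positivity)
  · rw [Nat.le_div_iff_mul_le hpos]
    have h4 : (8 * q ^ 15) ^ 2 ≤ q ^ 32 := le_trans (Nat.pow_le_pow_left (Nat.le_succ _) 2) hr2
    have h3 : q ^ 11 * (4 * (8 * q ^ 15) ^ 2 * (6 * lam + 1) * (128 * q ^ 2)) ≤ q ^ 11 * N := by
      calc q ^ 11 * (4 * (8 * q ^ 15) ^ 2 * (6 * lam + 1) * (128 * q ^ 2))
          ≤ q ^ 11 * (4 * q ^ 32 * (6 * lam + 1) * (128 * q ^ 2)) := by gcongr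
        _ = 3072 * (lam * q ^ 45) + 512 * q ^ 45 := by ring
        _ ≤ 3072 * N + 512 * q ^ 47 := by gcongr <;> omega
        _ ≤ 3072 * N + 512 * N := by gcongr
        _ = 3584 * N := by ring
        _ ≤ q ^ 11 * N := by
          gcongr
          calc 3584 ≤ 1000 ^ 11 := by norm_num
            _ ≤ q ^ 11 := Nat.pow_le_pow_left hq 11
    exact Nat.le_of_mul_le_mul_left h3 (by positivity)

/-- A large system of blocks forces many large pairwise anticomplete sets. -/
theorem Sys.false_of_noAnti (h : Sys G I S lam) (hG : NoC7 G) {q L N : ℕ}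
    (hd : NoAnti G S q L) (hq : 1000 ≤ q) (hq2 : q ^ 41 ≤ 2 ^ q)
    (hN : ∀ i ∈ I, #(S i) = N) (hlam : lam * q ^ 45 ≤ N) (hL : L * q ^ 46 ≤ N)
    (hNq : q ^ 47 ≤ N) (hI : q ^ 5 ≤ #I) : False := by
  set n := N / q ^ 41 + 1 with hn
  have hq41 : 0 < q ^ 41 := by positivity
  have hNn : N < n * q ^ 41 := by
    rw [hn, add_mul, one_mul]; exact Nat.lt_div_mul_add hq41
  have hnN : n * q ^ 41 ≤ 2 * N := by
    have := Nat.div_mul_le_self N (q ^ 41)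
    have : q ^ 41 ≤ q ^ 47 := Nat.pow_le_pow_right (by omega) (by norm_num)
    rw [hn, add_mul, one_mul]; omega
  set Sp : SimpleGraph V → V → Prop := fun H i =>
    ∃ T ⊆ S i, n ≤ #T ∧ ∀ x ∈ T, q ^ 4 * #(nb H T x) < #T with hSp
  have hbig : 3 * ((q + 1) * q ^ 3) ≤ q ^ 5 := by
    have : q ^ 5 = q * q * q ^ 3 := by ring
    rw [this, ← mul_assoc]
    refine Nat.mul_le_mul_right _ ?_
    nlinarith
  have extreme : ∀ H : SimpleGraph V, H = G ∨ H = Gᶜ →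
      #(I.filter fun i => Sp H i) < (q + 1) * q ^ 3 := by
    intro H hH
    by_contra! hc
    have hT : ∀ i, ∃ T ⊆ S i, Sp H i → n ≤ #T ∧ ∀ x ∈ T, q ^ 4 * #(nb H T x) < #T := by
      intro i
      by_cases hi : Sp H i
      · obtain ⟨T, h1, h2⟩ := hi
        exact ⟨T, h1, fun _ => h2⟩
      · exact ⟨∅, empty_subset _, fun h => absurd h hi⟩
    choose T hTS hT using hT
    have hsub : I.filter (fun i => Sp H i) ⊆ I := filter_subset _ _
    refine (h.mono hsub (fun i _ => subset_rfl) le_rfl).false_of_extreme hG hd (by omega) hq2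
      (n := n) (Nat.succ_pos _) (fun i hi => hN i (hsub hi)) hNn.le hlam hL hNq hTS
      (fun i hi => (hT i (mem_filter.1 hi).2).1) hc ?_
    rcases hH with rfl | rfl
    · exact Or.inl fun i hi => (hT i (mem_filter.1 hi).2).2
    · exact Or.inr fun i hi => (hT i (mem_filter.1 hi).2).2
  have e1 := extreme G (Or.inl rfl)
  have e2 := extreme Gᶜ (Or.inr rfl)
  set J := I.filter (fun i => ¬ Sp G i ∧ ¬ Sp Gᶜ i) with hJ
  have hcov : I ⊆ J ∪ I.filter (fun i => Sp G i) ∪ I.filter (fun i => Sp Gᶜ i) := by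
    intro i hi
    simp only [hJ, mem_union, mem_filter, hi, true_and]
    tauto
  have hcard := (card_le_card hcov).trans ((card_union_le _ _).trans
    (Nat.add_le_add_right (card_union_le _ _) _))
  have hJc : 8 * q ^ 2 ≤ #J := by
    have : 8 * q ^ 2 ≤ (q + 1) * q ^ 3 := by
      have : (q + 1) * q ^ 3 = ((q + 1) * q) * q ^ 2 := by ring
      rw [this]; gcongr; nlinarith
    omega
  have hJI : J ⊆ I := filter_subset _ _
  refine (h.mono hJI (fun i _ => subset_rfl) le_rfl).false_of_nonextreme hG hd hq hq2 (n := n)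
    (fun i hi => hN i (hJI hi)) hNn hnN hlam hL hNq hJc ?_
  intro i hi T hT hnT
  obtain ⟨-, h1, h2⟩ := mem_filter.1 hi
  simp only [hSp, not_exists, not_and, not_forall, not_lt, exists_prop] at h1 h2
  exact ⟨h1 T hT hnT, h2 T hT hnT⟩
end

section
open Finset Classical
variable {V : Type*} {G : SimpleGraph V}

/-- The number of common neighbours of `u` and `w` in `X`. -/
noncomputable def codeg (G : SimpleGraph V) (X : Finset V) (u w : V) : ℕ :=
  #(nb G X u ∩ nb G X w)

theorem codeg_comm (X : Finset V) (u w : V) : codeg G X u w = codeg G X w u := by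
  rw [codeg, codeg, inter_comm]

theorem sum_card_filter_comm {α β : Type*} (A : Finset α) (B : Finset β) (r : α → β → Prop)
    [∀ a b, Decidable (r a b)] : ∑ a ∈ A, #(B.filter (r a)) = ∑ b ∈ B, #(A.filter fun a => r a b) :=
  sum_card_bipartiteAbove_eq_sum_card_bipartiteBelow r

theorem sum_codeg_le {X : Finset V} {D : ℕ} (hdeg : ∀ v ∈ X, #(nb G X v) ≤ D) {v : V}
    (hv : v ∈ X) : ∑ w ∈ X, codeg G X v w ≤ D * D := by
  have h1 : ∀ w, codeg G X v w = #((nb G X v).filter fun z => G.Adj w z) := by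
    intro w
    rw [codeg]
    congr 1
    ext z
    simp only [mem_inter, mem_nb, mem_filter]
    tauto
  simp only [h1]
  rw [sum_card_filter_comm X (nb G X v) G.Adj]
  calc _ ≤ #(nb G X v) • D := by
        refine sum_le_card_nsmul _ _ _ fun z hz => ?_
        refine le_trans (le_of_eq ?_) (hdeg z (nb_subset hz))
        rw [nb]
        congr 1
        ext w
        simp [G.adj_comm]
    _ ≤ D * D := by rw [smul_eq_mul]; gcongr; exact hdeg v hv

theorem card_codeg_gt_le {X : Finset V} {D lam Q : ℕ} (hdeg : ∀ v ∈ X, #(nb G X v) ≤ D)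
    (hlam : D ≤ Q * (lam + 1)) {v : V} (hv : v ∈ X) :
    #(X.filter fun w => lam < codeg G X v w) ≤ D * Q := by
  have h1 : #(X.filter fun w => lam < codeg G X v w) • (lam + 1) ≤
      ∑ w ∈ X.filter (fun w => lam < codeg G X v w), codeg G X v w :=
    card_nsmul_le_sum _ _ _ fun w hw => (mem_filter.1 hw).2
  have h2 := h1.trans (sum_le_sum_of_subset (filter_subset _ _))
  have h3 := h2.trans (sum_codeg_le hdeg hv)
  refine Nat.le_of_mul_le_mul_right (h3.trans ?_) (Nat.succ_pos lam)
  rw [mul_assoc]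
  gcongr

theorem sum_card_heavy_le {X : Finset V} {D lam Q : ℕ} (hdeg : ∀ v ∈ X, #(nb G X v) ≤ D)
    (hlam : D ≤ Q * (lam + 1)) {v : V} (hv : v ∈ X) :
    ∑ w ∈ X, #((nb G X v).filter fun u => lam < codeg G X u w) ≤ D * (D * Q) := by
  rw [sum_card_filter_comm X (nb G X v) fun w u => lam < codeg G X u w]
  calc _ ≤ #(nb G X v) • (D * Q) :=
        sum_le_card_nsmul _ _ _ fun u hu => card_codeg_gt_le hdeg hlam (nb_subset hu)
    _ ≤ _ := by rw [smul_eq_mul]; gcongr; exact hdeg v hv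

theorem sum_card_heavy_le' {X : Finset V} {D lam Q : ℕ} (hdeg : ∀ v ∈ X, #(nb G X v) ≤ D)
    (hlam : D ≤ Q * (lam + 1)) {v : V} (hv : v ∈ X) :
    ∑ w ∈ X, #((nb G X w).filter fun u => lam < codeg G X u v) ≤ D * (D * Q) := by
  have h1 : ∀ w, (nb G X w).filter (fun u => lam < codeg G X u v) =
      (X.filter fun u => lam < codeg G X v u).filter fun u => G.Adj w u := by
    intro w
    ext u
    simp only [nb, mem_filter, codeg_comm X u v]
    tauto
  simp only [h1]
  rw [sum_card_filter_comm X _ G.Adj]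
  calc _ ≤ #(X.filter fun u => lam < codeg G X v u) • D := by
        refine sum_le_card_nsmul _ _ _ fun z hz => ?_
        refine le_trans (le_of_eq ?_) (hdeg z (mem_filter.1 hz).1)
        rw [nb]
        congr 1
        ext w
        simp [G.adj_comm]
    _ ≤ D * Q * D := by rw [smul_eq_mul]; gcongr; exact card_codeg_gt_le hdeg hlam hv
    _ = _ := by ring

theorem card_filter_lt_mul_le {X : Finset V} {f : V → ℕ} {D c s : ℕ} (hD : 0 < D)
    (hs : ∑ w ∈ X, f w ≤ D * s) : #(X.filter fun w => D < f w * c) ≤ c * s := by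
  have h1 : #(X.filter fun w => D < f w * c) • D ≤
      ∑ w ∈ X.filter (fun w => D < f w * c), f w * c :=
    card_nsmul_le_sum _ _ _ fun w hw => (mem_filter.1 hw).2.le
  have h2 := h1.trans (sum_le_sum_of_subset (filter_subset _ _))
  rw [← sum_mul, smul_eq_mul] at h2
  refine Nat.le_of_mul_le_mul_right (h2.trans ?_) hD
  calc _ ≤ D * s * c := by gcongr
    _ = _ := by ring

/-- `v` and `w` cannot both be used as apexes of a system of `m` blocks. -/
def Clash (G : SimpleGraph V) (X : Finset V) (D lam m : ℕ) (v w : V) : Prop :=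
  G.Adj v w ∨ D < codeg G X v w * (32 * m) ∨
    D < #((nb G X v).filter fun u => lam < codeg G X u w) * (32 * m) ∨
    D < #((nb G X w).filter fun u => lam < codeg G X u v) * (32 * m)

theorem Clash.symm {X : Finset V} {D lam m : ℕ} {v w : V} (h : Clash G X D lam m v w) :
    Clash G X D lam m w v := by
  unfold Clash at *
  rw [G.adj_comm, codeg_comm]
  tauto

theorem card_clash_le {X : Finset V} {D lam Q m : ℕ} (hD : 0 < D)
    (hdeg : ∀ v ∈ X, #(nb G X v) ≤ D) (hlam : D ≤ Q * (lam + 1)) {v : V} (hv : v ∈ X) :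
    #(X.filter (Clash G X D lam m v)) ≤ D + 32 * m * D + 2 * (32 * m * (D * Q)) := by
  have hsub : X.filter (Clash G X D lam m v) ⊆
      nb G X v ∪ (X.filter fun w => D < codeg G X v w * (32 * m)) ∪
      (X.filter fun w => D < #((nb G X v).filter fun u => lam < codeg G X u w) * (32 * m)) ∪
      (X.filter fun w => D < #((nb G X w).filter fun u => lam < codeg G X u v) * (32 * m)) := by
    intro w hw
    obtain ⟨hwX, hw⟩ := mem_filter.1 hw
    simp only [mem_union, mem_filter, mem_nb, hwX, true_and]
    unfold Clash at hw
    tauto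
  have h1 := hdeg v hv
  have h2 := card_filter_lt_mul_le (c := 32 * m) hD (sum_codeg_le hdeg hv)
  have h3 := card_filter_lt_mul_le (c := 32 * m) hD (sum_card_heavy_le hdeg hlam hv)
  have h4 := card_filter_lt_mul_le (c := 32 * m) hD (sum_card_heavy_le' hdeg hlam hv)
  refine (card_le_card hsub).trans ((card_union_le _ _).trans ?_)
  have h5 := card_union_le (nb G X v ∪ (X.filter fun w => D < codeg G X v w * (32 * m)))
    (X.filter fun w => D < #((nb G X v).filter fun u => lam < codeg G X u w) * (32 * m))
  have h6 := card_union_le (nb G X v) (X.filter fun w => D < codeg G X v w * (32 * m))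
  omega

/-- Construction of a system of blocks inside a graph of small maximum degree. -/
theorem exists_sys {X : Finset V} {D lam Q m : ℕ} (hD : 0 < D) (hm : 0 < m)
    (hdeg : ∀ v ∈ X, #(nb G X v) ≤ D) (hlam : D ≤ Q * (lam + 1))
    (hhalf : #X ≤ 2 * #(X.filter fun v => D ≤ 8 * #(nb G X v)))
    (hX : 2 * (m * (D + 32 * m * D + 2 * (32 * m * (D * Q)) + 1)) ≤ #X) :
    ∃ (I : Finset V) (S : V → Finset V) (N : ℕ), Sys G I S lam ∧ (∀ i, S i ⊆ X) ∧ #I = m ∧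
      (∀ i ∈ I, #(S i) = N) ∧ D ≤ 16 * N := by
  obtain ⟨I, hI, hIm, hIc⟩ := exists_independent (Clash G X D lam m) (fun _ _ h => h.symm)
    (D + 32 * m * D + 2 * (32 * m * (D * Q))) m (X.filter fun v => D ≤ 8 * #(nb G X v)) (by
      intro v hv
      have hvX := (mem_filter.1 hv).1
      refine (card_le_card ?_).trans (card_clash_le (m := m) hD hdeg hlam hvX)
      intro w hw
      obtain ⟨h1, -, h2⟩ := mem_filter.1 hw
      exact mem_filter.2 ⟨(mem_filter.1 h1).1, h2⟩) (by omega)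
  set R : V → V → Finset V := fun i j => (nb G X i ∩ nb G X j) ∪
    (nb G X i).filter fun u => lam < codeg G X u j with hR
  set S' : V → Finset V := fun i => nb G X i \ (I.erase i).biUnion (R i) with hS'
  have hS'c : ∀ i ∈ I, D ≤ 16 * #(S' i) := by
    intro i hi
    have h1 : ∀ j ∈ I.erase i, 16 * m * #(R i j) ≤ D := by
      intro j hj
      have := hIc i hi j (mem_of_mem_erase hj) (ne_of_mem_erase hj).symm
      simp only [Clash, not_or, not_lt] at this
      obtain ⟨-, h1, h2, -⟩ := this
      have h3 : #(R i j) ≤ codeg G X i j + #((nb G X i).filter fun u => lam < codeg G X u j) :=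
        card_union_le _ _
      nlinarith
    have h2 : 16 * m * #((I.erase i).biUnion (R i)) ≤ m * D := by
      calc _ ≤ 16 * m * ∑ j ∈ I.erase i, #(R i j) := by gcongr; exact card_biUnion_le
        _ = ∑ j ∈ I.erase i, 16 * m * #(R i j) := by rw [mul_sum]
        _ ≤ #(I.erase i) • D := sum_le_card_nsmul _ _ _ h1
        _ ≤ m * D := by
          rw [smul_eq_mul, ← hIm]; gcongr; exact erase_subset _ _
    have h3 : 16 * #((I.erase i).biUnion (R i)) ≤ D := by
      refine Nat.le_of_mul_le_mul_left (le_trans (le_of_eq ?_) h2) hm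
      ring
    have h4 := le_card_sdiff ((I.erase i).biUnion (R i)) (nb G X i)
    have h5 := (mem_filter.1 (hI hi)).2
    have h6 : #(S' i) = #(nb G X i \ (I.erase i).biUnion (R i)) := rfl
    omega
  have hS : ∀ i, ∃ T ⊆ S' i, i ∈ I → #T = (D + 15) / 16 := by
    intro i
    by_cases hi : i ∈ I
    · obtain ⟨T, hT, hTc⟩ := exists_subset_card_eq (s := S' i) (n := (D + 15) / 16)
        (by have := hS'c i hi; omega)
      exact ⟨T, hT, fun _ => hTc⟩
    · exact ⟨∅, empty_subset _, fun h => absurd h hi⟩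
  choose S hSS hSc using hS
  have hmem : ∀ i s, s ∈ S i → s ∈ nb G X i ∧ ∀ j ∈ I, j ≠ i → s ∉ R i j := by
    intro i s hs
    have := hSS i hs
    simp only [hS', mem_sdiff, mem_biUnion, mem_erase, not_exists, not_and] at this
    exact ⟨this.1, fun j hj hji => this.2 j ⟨hji, hj⟩⟩
  refine ⟨I, S, (D + 15) / 16, ⟨?_, ?_, ?_, ?_⟩, ?_, hIm, hSc, by omega⟩
  · exact fun i hi s hs => (mem_nb.1 (hmem i s hs).1).2
  · intro i hi j hj hij
    exact hIc i hi j hj hij.ne (Or.inl hij)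
  · intro i hi j hj hij s hs his
    obtain ⟨h1, h2⟩ := hmem j s hs
    refine h2 i hi hij ?_
    simp only [hR, mem_union, mem_inter]
    exact Or.inl ⟨h1, mem_nb.2 ⟨nb_subset h1, his⟩⟩
  · intro i hi j hj hij s hs
    obtain ⟨h1, h2⟩ := hmem j s hs
    have h3 := h2 i hi hij
    simp only [hR, mem_union, mem_filter, not_or, not_and, not_lt] at h3
    refine le_trans (card_le_card ?_) (h3.2 h1)
    intro z hz
    obtain ⟨hz1, hz2⟩ := mem_nb.1 hz
    have hz3 := (hmem i z hz1).1
    exact mem_inter.2 ⟨mem_nb.2 ⟨nb_subset hz3, hz2⟩, hz3⟩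
  · intro i s hs
    exact nb_subset (hmem i s hs).1

/-- A nearly regular graph without induced seven-cycles, of density polynomially small in `1 / q`,
contains `q` large pairwise anticomplete sets. -/
theorem exists_anticomplete {X : Finset V} {D q : ℕ} (hG : NoC7 G) (hq : 1000 ≤ q)
    (hq2 : q ^ 41 ≤ 2 ^ q) (hdeg : ∀ v ∈ X, #(nb G X v) ≤ D)
    (hhalf : #X ≤ 2 * #(X.filter fun v => D ≤ 8 * #(nb G X v)))
    (hX : D * q ^ 58 ≤ #X) (hD : q ^ 60 ≤ D) :
    ∃ (I : Finset V) (T : V → Finset V), #I = q ∧ (∀ i ∈ I, T i ⊆ X) ∧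
      (∀ i ∈ I, ∀ j ∈ I, i ≠ j → Anti G (T i) (T j)) ∧ ∀ i ∈ I, D ≤ q ^ 60 * #(T i) := by
  by_contra! hcon
  have hq60 : 0 < q ^ 60 := by positivity
  have hq46 : 0 < q ^ 46 := by positivity
  have hD0 : 0 < D := by omega
  set lam := D / q ^ 46 with hlam
  have hlam1 : D ≤ q ^ 46 * (lam + 1) := by
    rw [mul_add, mul_one, mul_comm]; exact (Nat.lt_div_mul_add hq46).le
  have hlam2 : lam * q ^ 46 ≤ D := Nat.div_mul_le_self _ _
  obtain ⟨I, S, N, hS, hSX, hI, hN, hDN⟩ := exists_sys (m := q ^ 5) hD0 (by positivity) hdeg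
    hlam1 hhalf (by
      refine le_trans ?_ hX
      have h1 : 1 ≤ q ^ 5 := Nat.one_le_pow _ _ (by omega)
      have h2 : 1 ≤ q ^ 46 := hq46
      have e1 : D ≤ q ^ 5 * D * q ^ 46 := by
        calc D = 1 * D * 1 := by ring
          _ ≤ _ := by gcongr
      have e2 : q ^ 5 * D ≤ q ^ 5 * D * q ^ 46 := Nat.le_mul_of_pos_right _ hq46
      calc 2 * (q ^ 5 * (D + 32 * q ^ 5 * D + 2 * (32 * q ^ 5 * (D * q ^ 46)) + 1))
          = 2 * (q ^ 5 * (D + 32 * (q ^ 5 * D) + 64 * (q ^ 5 * D * q ^ 46) + 1)) := by ring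
        _ ≤ 2 * (q ^ 5 * (98 * (q ^ 5 * D * q ^ 46))) := by gcongr; omega
        _ = 196 * (D * q ^ 56) := by ring
        _ ≤ q ^ 2 * (D * q ^ 56) := by gcongr; nlinarith
        _ = _ := by ring)
  set L := D / q ^ 60 + 1 with hL
  have hLD : L * q ^ 60 ≤ 2 * D := by
    have := Nat.div_mul_le_self D (q ^ 60)
    rw [hL, add_mul, one_mul]; omega
  have hd : NoAnti G S q L := by
    intro J T hJ hTS hA
    obtain ⟨i, hi, hlt⟩ := hcon J T hJ (fun i hi => (hTS i hi).trans (hSX i)) hA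
    refine ⟨i, hi, Nat.lt_succ_of_le ?_⟩
    rw [Nat.le_div_iff_mul_le hq60, mul_comm]
    exact hlt.le
  refine hS.false_of_noAnti hG hd hq hq2 hN ?_ ?_ ?_ hI.ge
  · have : lam * q ^ 46 = q * (lam * q ^ 45) := by ring
    nlinarith
  · have h1 : L * q ^ 60 = q ^ 14 * (L * q ^ 46) := by ring
    have h2 : q ≤ q ^ 14 := Nat.le_self_pow (by norm_num) q
    nlinarith [Nat.zero_le (L * q ^ 46)]
  · have h1 : q ^ 60 = q ^ 13 * q ^ 47 := by ring
    have h2 : q ≤ q ^ 13 := Nat.le_self_pow (by norm_num) q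
    nlinarith [Nat.zero_le (q ^ 47)]
end

section
open Finset Classical
universe u
variable {V : Type u} {G : SimpleGraph V}

/-- Greedy embedding of an arbitrary pattern when no two large sets form a sparse or dense pair. -/
theorem exists_pattern {U : Finset V} {y p : ℕ} (hy : 0 < y) (hp : 0 < p)
    (hU : ∀ A ⊆ U, ∀ B ⊆ U, y ≤ #A → y ≤ #B →
      (∃ a ∈ A, #B < p * #(nb G B a)) ∧ ∃ a ∈ A, #B < p * #(B \ nb G B a)) :
    ∀ (k : ℕ) (H : Fin k → Fin k → Prop) (W : Fin k → Finset V), (∀ i, W i ⊆ U) →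
      (∀ i, k * y * p ^ k ≤ #(W i)) →
      ∃ f : Fin k → V, (∀ i, f i ∈ W i) ∧ ∀ i j, i < j → (G.Adj (f i) (f j) ↔ H i j) := by
  intro k
  induction k with
  | zero => exact fun H W _ _ => ⟨fun i => i.elim0, fun i => i.elim0, fun i => i.elim0⟩
  | succ k ih =>
    intro H W hWU hWc
    set Z : Fin k → V → Finset V := fun j v =>
      if H 0 j.succ then nb G (W j.succ) v else W j.succ \ nb G (W j.succ) v with hZ
    set A : Fin k → Finset V := fun j =>
      (W 0).filter fun v => p * #(Z j v) ≤ #(W j.succ) with hA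
    have hpk : 1 ≤ p ^ (k + 1) := Nat.one_le_pow _ _ hp
    have hWy : ∀ i, (k + 1) * y ≤ #(W i) := fun i =>
      le_trans (Nat.le_mul_of_pos_right _ hpk) (hWc i)
    have hAy : ∀ j, #(A j) < y := by
      intro j
      by_contra! hc
      obtain ⟨⟨a, ha, ha'⟩, ⟨b, hb, hb'⟩⟩ := hU (A j) ((filter_subset _ _).trans (hWU 0))
        (W j.succ) (hWU _) hc (by have := hWy j.succ; nlinarith)
      have h1 := (mem_filter.1 ha).2
      have h2 := (mem_filter.1 hb).2
      by_cases hH : H 0 j.succ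
      · simp only [hZ, if_pos hH] at h1; omega
      · simp only [hZ, if_neg hH] at h2; omega
    obtain ⟨v, hv, hvA⟩ : ∃ v ∈ W 0, v ∉ univ.biUnion A := by
      refine exists_mem_notMem_of_card_lt_card ?_
      have h1 : #(univ.biUnion A) ≤ #(univ : Finset (Fin k)) * y :=
        card_biUnion_le_card_mul _ _ _ fun j _ => (hAy j).le
      rw [card_univ, Fintype.card_fin] at h1
      have := hWy 0
      rw [add_mul, one_mul] at this
      omega
    have hvZ : ∀ j, #(W j.succ) < p * #(Z j v) := by
      intro j
      by_contra! hc
      exact hvA (mem_biUnion.2 ⟨j, mem_univ _, mem_filter.2 ⟨hv, hc⟩⟩)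
    have hZW : ∀ j, Z j v ⊆ W j.succ := by
      intro j
      simp only [hZ]
      split_ifs
      · exact nb_subset
      · exact sdiff_subset
    obtain ⟨f, hf1, hf2⟩ := ih (fun i j => H i.succ j.succ) (fun j => Z j v)
      (fun j => (hZW j).trans (hWU _)) (by
        intro j
        have h1 := (hWc j.succ).trans (hvZ j).le
        refine Nat.le_of_mul_le_mul_left (le_trans ?_ h1) hp
        calc p * (k * y * p ^ k) = k * y * p ^ (k + 1) := by ring
          _ ≤ _ := by gcongr; omega)
    refine ⟨Fin.cons v f, ?_, ?_⟩
    · intro i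
      refine Fin.cases hv (fun j => hZW j (hf1 j)) i
    · intro i j
      refine Fin.cases ?_ (fun i => ?_) i <;> refine Fin.cases ?_ (fun j => ?_) j
      · intro h; exact absurd h (lt_irrefl _)
      · intro _
        have h1 := hf1 j
        simp only [hZ] at h1
        simp only [Fin.cons_zero, Fin.cons_succ]
        split_ifs at h1 with hH
        · exact iff_of_true (mem_nb.1 h1).2 hH
        · refine iff_of_false (fun e => ?_) hH
          exact (mem_sdiff.1 h1).2 (mem_nb.2 ⟨(mem_sdiff.1 h1).1, e⟩)
      · intro h; exact absurd h (Nat.not_lt_zero _)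
      · intro h
        simp only [Fin.cons_succ]
        exact hf2 i j (Fin.succ_lt_succ_iff.1 h)

theorem NoC7.exists_sparse_pair (hG : NoC7 G) {U : Finset V} {y p : ℕ} (hy : 0 < y) (hp : 0 < p)
    (hU : 28 * y * p ^ 7 ≤ #U) :
    ∃ H, (H = G ∨ H = Gᶜ) ∧ ∃ A ⊆ U, ∃ B ⊆ U, Disjoint A B ∧ #A = y ∧ 2 * y ≤ #B ∧
      ∀ a ∈ A, p * #(nb H B a) ≤ 2 * #B := by
  obtain ⟨H, hH, A, hA, B, hB, hAy, hBy, hAB⟩ : ∃ H, (H = G ∨ H = Gᶜ) ∧ ∃ A ⊆ U, ∃ B ⊆ U,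
      4 * y ≤ #A ∧ 4 * y ≤ #B ∧ ∀ a ∈ A, p * #(nb H B a) ≤ #B := by
    by_contra! hc
    obtain ⟨f, -, hf⟩ := exists_pattern (G := G) (U := U) (y := 4 * y) (p := p) (by omega) hp (by
      intro A hA B hB hAy hBy
      refine ⟨hc G (Or.inl rfl) A hA B hB hAy hBy, ?_⟩
      obtain ⟨a, ha, h⟩ := hc Gᶜ (Or.inr rfl) A hA B hB hAy hBy
      refine ⟨a, ha, h.trans_le (Nat.mul_le_mul_left _ (card_le_card ?_))⟩
      intro x hx
      rw [mem_nb, compl_adj] at hx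
      exact mem_sdiff.2 ⟨hx.1, fun h => hx.2.2 (mem_nb.1 h).2⟩) 7
      (fun i j => (cycleGraph 7).Adj i j) (fun _ => U) (fun _ => subset_rfl) (fun _ => by
        calc 7 * (4 * y) * p ^ 7 = 28 * y * p ^ 7 := by ring
          _ ≤ _ := hU)
    exact hG.not_pattern f hf
  obtain ⟨A', hA', hA'y⟩ := exists_subset_card_eq (s := A) (n := y) (by omega)
  have h1 := le_card_sdiff A' B
  refine ⟨H, hH, A', hA'.trans hA, B \ A', sdiff_subset.trans hB, disjoint_sdiff, hA'y, by omega,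
    fun a ha => ?_⟩
  have h2 := hAB a (hA' ha)
  have h3 : #(nb H (B \ A') a) ≤ #(nb H B a) := card_le_card (nb_mono sdiff_subset)
  have h4 : p * #(nb H (B \ A') a) ≤ p * #(nb H B a) := Nat.mul_le_mul_left _ h3
  omega

/-- The number of ordered adjacent pairs in `X`. -/
noncomputable def degSum (G : SimpleGraph V) (X : Finset V) : ℕ := ∑ x ∈ X, #(nb G X x)

theorem sum_nb_comm (X C : Finset V) : ∑ x ∈ X, #(nb G C x) = ∑ c ∈ C, #(nb G X c) := by
  unfold nb
  rw [sum_card_filter_comm X C G.Adj]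
  simp only [G.adj_comm]

theorem degSum_union_le (X C : Finset V) (h : Disjoint X C) :
    degSum G (X ∪ C) ≤ degSum G X + 2 * ∑ c ∈ C, #(nb G X c) + #C * #C := by
  have h1 : ∀ x, #(nb G (X ∪ C) x) ≤ #(nb G X x) + #(nb G C x) := by
    intro x
    rw [nb, filter_union]
    exact card_union_le _ _
  have h2 : ∑ c ∈ C, #(nb G C c) ≤ #C * #C :=
    (sum_le_card_nsmul _ _ #C fun c _ => card_le_card nb_subset).trans (le_of_eq rfl)
  rw [degSum, sum_union h]
  calc _ ≤ ∑ x ∈ X, (#(nb G X x) + #(nb G C x)) + ∑ x ∈ C, (#(nb G X x) + #(nb G C x)) :=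
        Nat.add_le_add (sum_le_sum fun x _ => h1 x) (sum_le_sum fun x _ => h1 x)
    _ ≤ _ := by
      rw [sum_add_distrib, sum_add_distrib, sum_nb_comm X C, degSum]
      omega

theorem exists_sparse_extension {A B X : Finset V} {a p s : ℕ} (hAB : Disjoint A B)
    (hsp : ∀ x ∈ A, 4 * p * #(nb G B x) ≤ 2 * #B) (hXA : X ⊆ A) (hXc : #X = a * s)
    (hX : p * degSum G X ≤ (a * p + a ^ 2) * s ^ 2) (hB : 2 * s ≤ #B) :
    ∃ Y ⊆ A ∪ B, #Y = (a + 1) * s ∧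
      p * degSum G Y ≤ ((a + 1) * p + (a + 1) ^ 2) * s ^ 2 := by
  have hbad : 2 * #(B.filter fun b => a * s < p * #(nb G X b)) ≤ #B := by
    by_contra! hc
    have h1 : #(B.filter fun b => a * s < p * #(nb G X b)) • (a * s + 1) ≤
        ∑ b ∈ B.filter (fun b => a * s < p * #(nb G X b)), p * #(nb G X b) :=
      card_nsmul_le_sum _ _ _ fun b hb => (mem_filter.1 hb).2
    have h2 := h1.trans (sum_le_sum_of_subset (filter_subset _ _))
    rw [← mul_sum, ← sum_nb_comm X B, smul_eq_mul] at h2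
    have h3 : ∑ x ∈ X, 4 * p * #(nb G B x) ≤ #X • (2 * #B) :=
      sum_le_card_nsmul _ _ _ fun x hx => hsp x (hXA hx)
    rw [← mul_sum, hXc, smul_eq_mul] at h3
    nlinarith
  obtain ⟨C, hC, hCs⟩ := exists_subset_card_eq
    (s := B.filter fun b => ¬ a * s < p * #(nb G X b)) (n := s) (by
      have := card_filter_add_card_filter_not (s := B) (fun b => a * s < p * #(nb G X b))
      omega)
  have hCB : C ⊆ B := hC.trans (filter_subset _ _)
  have hdis : Disjoint X C := disjoint_of_subset_left hXA (disjoint_of_subset_right hCB hAB)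
  refine ⟨X ∪ C, union_subset_union hXA hCB, ?_, ?_⟩
  · rw [card_union_of_disjoint hdis, hXc, hCs]; ring
  · have h1 := degSum_union_le (G := G) X C hdis
    have h2 : p * ∑ c ∈ C, #(nb G X c) ≤ s * (a * s) := by
      rw [mul_sum, ← hCs, ← smul_eq_mul, hCs]
      refine (sum_le_card_nsmul _ _ (a * s) fun c hc => ?_).trans (le_of_eq (by rw [hCs]))
      exact not_lt.1 (mem_filter.1 (hC hc)).2
    rw [hCs] at h1
    calc p * degSum G (X ∪ C)
        ≤ p * (degSum G X + 2 * ∑ c ∈ C, #(nb G X c) + s * s) := Nat.mul_le_mul_left _ h1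
      _ = p * degSum G X + 2 * (p * ∑ c ∈ C, #(nb G X c)) + p * (s * s) := by ring
      _ ≤ (a * p + a ^ 2) * s ^ 2 + 2 * (s * (a * s)) + p * (s * s) := by gcongr
      _ ≤ _ := by nlinarith [sq_nonneg s]

theorem exists_sparse_edges (p : ℕ) (hp : 0 < p) : ∀ a b : ℕ, ∃ k : ℕ, 0 < k ∧
    ∀ (V : Type u) (G : SimpleGraph V), NoC7 G → ∀ U : Finset V, k ≤ #U → ∃ s, #U ≤ k * s ∧
      ((∃ X ⊆ U, #X = (a + 1) * s ∧
          p * degSum G X ≤ ((a + 1) * p + (a + 1) ^ 2) * s ^ 2) ∨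
        ∃ X ⊆ U, #X = (b + 1) * s ∧
          p * degSum Gᶜ X ≤ ((b + 1) * p + (b + 1) ^ 2) * s ^ 2) := by
  have triv : ∀ (V : Type u) (G : SimpleGraph V) (U : Finset V), ∃ X ⊆ U, #X = (0 + 1) * #U ∧
      p * degSum G X ≤ ((0 + 1) * p + (0 + 1) ^ 2) * #U ^ 2 := by
    intro V G U
    refine ⟨U, subset_rfl, by ring, ?_⟩
    have h1 : degSum G U ≤ #U * #U :=
      (sum_le_card_nsmul _ _ #U fun c _ => card_le_card nb_subset).trans (le_of_eq rfl)
    nlinarith [Nat.zero_le (#U ^ 2), Nat.mul_le_mul_left p h1]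
  intro a
  induction a with
  | zero =>
    intro b
    exact ⟨1, one_pos, fun V G _ U _ => ⟨#U, by simp, Or.inl (triv V G U)⟩⟩
  | succ a iha =>
    intro b
    induction b with
    | zero => exact ⟨1, one_pos, fun V G _ U _ => ⟨#U, by simp, Or.inr (triv V Gᶜ U)⟩⟩
    | succ b ihb =>
      obtain ⟨k₁, hk₁, H₁⟩ := iha (b + 1)
      obtain ⟨k₂, hk₂, H₂⟩ := ihb
      set P := 28 * (4 * p) ^ 7 with hP
      have hP0 : 0 < P := by positivity
      refine ⟨2 * P * (k₁ + k₂), by positivity, fun V G hG U hU => ?_⟩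
      set y := #U / P with hy
      have hyP : y * P ≤ #U := Nat.div_mul_le_self _ _
      have hyP' : #U < y * P + P := Nat.lt_div_mul_add hP0
      have hyk : k₁ + k₂ ≤ y := by
        rw [hy, Nat.le_div_iff_mul_le hP0]
        refine le_trans ?_ hU
        nlinarith [Nat.zero_le (P * (k₁ + k₂))]
      have hUy : #U ≤ 2 * P * y := by nlinarith
      have hfin : ∀ s k, k ≤ k₁ + k₂ → y ≤ k * s → #U ≤ 2 * P * (k₁ + k₂) * s := by
        intro s k hk hys
        calc #U ≤ 2 * P * y := hUy
          _ ≤ 2 * P * ((k₁ + k₂) * s) := by gcongr; exact hys.trans (by gcongr)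
          _ = _ := by ring
      obtain ⟨H, hH, A, hA, B, hB, hdis, hAy, hBy, hsp⟩ := hG.exists_sparse_pair (U := U) (y := y)
        (p := 4 * p) (by omega) (by omega) (by
          calc 28 * y * (4 * p) ^ 7 = y * P := by rw [hP]; ring
            _ ≤ _ := hyP)
      have hs : ∀ X ⊆ A, ∀ c s, #X = (c + 1) * s → 2 * s ≤ #B := by
        intro X hX c s hXc
        have := card_le_card hX
        nlinarith [Nat.zero_le (c * s)]
      rcases hH with rfl | rfl
      · obtain ⟨s, hs1, hs2⟩ := H₁ V H hG A (by omega)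
        refine ⟨s, hfin s k₁ (by omega) (hAy ▸ hs1), ?_⟩
        rcases hs2 with ⟨X, hXA, hXc, hX⟩ | ⟨X, hXA, hXc, hX⟩
        · obtain ⟨Y, hY, hYc, hYe⟩ := exists_sparse_extension hdis hsp hXA hXc hX
            (hs X hXA a s hXc)
          exact Or.inl ⟨Y, hY.trans (union_subset hA hB), hYc, hYe⟩
        · exact Or.inr ⟨X, hXA.trans hA, hXc, hX⟩
      · obtain ⟨s, hs1, hs2⟩ := H₂ V G hG A (by omega)
        refine ⟨s, hfin s k₂ (by omega) (hAy ▸ hs1), ?_⟩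
        rcases hs2 with ⟨X, hXA, hXc, hX⟩ | ⟨X, hXA, hXc, hX⟩
        · exact Or.inl ⟨X, hXA.trans hA, hXc, hX⟩
        · obtain ⟨Y, hY, hYc, hYe⟩ := exists_sparse_extension hdis hsp hXA hXc hX
            (hs X hXA b s hXc)
          exact Or.inr ⟨Y, hY.trans (union_subset hA hB), hYc, hYe⟩

theorem exists_sparse_of_degSum {X : Finset V} {E : ℕ}
    (hX : 8 * E * degSum G X ≤ 2 * #X ^ 2) :
    ∃ Y ⊆ X, #X ≤ 2 * #Y ∧ ∀ v ∈ Y, E * #(nb G Y v) ≤ #Y := by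
  have hbad : 2 * #(X.filter fun v => #X < 2 * E * #(nb G X v)) ≤ #X := by
    have h1 : #(X.filter fun v => #X < 2 * E * #(nb G X v)) • #X ≤
        ∑ v ∈ X.filter (fun v => #X < 2 * E * #(nb G X v)), 2 * E * #(nb G X v) :=
      card_nsmul_le_sum _ _ _ fun b hb => (mem_filter.1 hb).2.le
    have h2 := h1.trans (sum_le_sum_of_subset (filter_subset _ _))
    rw [← mul_sum, smul_eq_mul] at h2
    have h3 : 4 * (2 * E * degSum G X) ≤ 2 * #X ^ 2 := le_trans (le_of_eq (by ring)) hX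
    rw [degSum] at h3
    rcases Nat.eq_zero_or_pos #X with h0 | h0
    · have := card_le_card (filter_subset (fun v => #X < 2 * E * #(nb G X v)) X)
      omega
    · nlinarith
  have hsplit := card_filter_add_card_filter_not (s := X) (fun v => #X < 2 * E * #(nb G X v))
  refine ⟨X.filter fun v => ¬ #X < 2 * E * #(nb G X v), filter_subset _ _, by omega, ?_⟩
  intro v hv
  have h1 := not_lt.1 (mem_filter.1 hv).2
  have h2 : #(nb G (X.filter fun v => ¬ #X < 2 * E * #(nb G X v)) v) ≤ #(nb G X v) :=
    card_le_card (nb_mono (filter_subset _ _))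
  have h3 := Nat.mul_le_mul_left (2 * E) h2
  rw [mul_assoc] at h3 h1
  rw [mul_assoc] at h3
  omega

/-- Rödl's theorem for graphs without induced seven-cycles. -/
theorem exists_sparse_subset (E : ℕ) (hE : 0 < E) : ∃ k : ℕ, 0 < k ∧
    ∀ (V : Type u) (G : SimpleGraph V), NoC7 G → ∀ U : Finset V, k ≤ #U →
      ∃ H, (H = G ∨ H = Gᶜ) ∧ ∃ X ⊆ U, #U ≤ k * #X ∧ ∀ v ∈ X, E * #(nb H X v) ≤ #X := by
  obtain ⟨k, hk, H⟩ := exists_sparse_edges.{u} (8 * E) (by omega) (8 * E - 1) (8 * E - 1)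
  refine ⟨2 * k, by omega, fun V G hG U hU => ?_⟩
  obtain ⟨s, hs, h⟩ := H V G hG U (by omega)
  rw [Nat.sub_add_cancel (by omega)] at h
  have key : ∀ K : SimpleGraph V, (∃ X ⊆ U, #X = 8 * E * s ∧
      8 * E * degSum K X ≤ (8 * E * (8 * E) + (8 * E) ^ 2) * s ^ 2) →
      ∃ X ⊆ U, #U ≤ 2 * k * #X ∧ ∀ v ∈ X, E * #(nb K X v) ≤ #X := by
    rintro K ⟨X, hXU, hXc, hX⟩
    obtain ⟨Y, hYX, hY, hYd⟩ := exists_sparse_of_degSum (G := K) (X := X)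
      (by rw [hXc]; refine hX.trans (le_of_eq (by ring)))
    refine ⟨Y, hYX.trans hXU, ?_, hYd⟩
    calc #U ≤ k * s := hs
      _ ≤ k * #X := by gcongr; rw [hXc]; nlinarith
      _ ≤ k * (2 * #Y) := by gcongr
      _ = _ := by ring
  rcases h with h | h
  · exact ⟨G, Or.inl rfl, key G h⟩
  · exact ⟨Gᶜ, Or.inr rfl, key Gᶜ h⟩
end

section
open Finset Classical
universe u
variable {V : Type u} {G : SimpleGraph V}

/-- The largest size of a stable set of `G` contained in `X`. -/
noncomputable def stabNum (G : SimpleGraph V) (X : Finset V) : ℕ :=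
  (X.powerset.filter (Stab G)).sup card

theorem Stab.card_le_stabNum {X T : Finset V} (hT : Stab G T) (hTX : T ⊆ X) :
    #T ≤ stabNum G X :=
  le_sup (f := card) (mem_filter.2 ⟨mem_powerset.2 hTX, hT⟩)

theorem exists_stab_card_eq (G : SimpleGraph V) (X : Finset V) :
    ∃ T ⊆ X, Stab G T ∧ #T = stabNum G X := by
  obtain ⟨T, hT, hTc⟩ := exists_mem_eq_sup (X.powerset.filter (Stab G))
    ⟨∅, mem_filter.2 ⟨empty_mem_powerset _, by intro a ha; simp at ha⟩⟩ card
  obtain ⟨h1, h2⟩ := mem_filter.1 hT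
  exact ⟨T, mem_powerset.1 h1, h2, hTc.symm⟩

theorem stabNum_mono {X Y : Finset V} (h : X ⊆ Y) : stabNum G X ≤ stabNum G Y := by
  obtain ⟨T, hT, hs, hc⟩ := exists_stab_card_eq G X
  exact hc ▸ hs.card_le_stabNum (hT.trans h)

theorem stabNum_pos {X : Finset V} {a : V} (ha : a ∈ X) : 0 < stabNum G X := by
  have : Stab G {a} := by
    intro x hx y hy
    rw [mem_singleton.1 hx, mem_singleton.1 hy]
    exact G.loopless.irrefl a
  have h := this.card_le_stabNum (singleton_subset_iff.2 ha)
  rw [card_singleton] at h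
  omega

theorem two_le_stabNum {X : Finset V} {a b : V} (ha : a ∈ X) (hb : b ∈ X) (hab : a ≠ b)
    (h : ¬ G.Adj a b) : 2 ≤ stabNum G X := by
  have : Stab G {a, b} := by
    intro x hx y hy
    simp only [mem_insert, mem_singleton] at hx hy
    rcases hx with rfl | rfl <;> rcases hy with rfl | rfl
    · simp
    · exact h
    · exact fun e => h e.symm
    · simp
  rw [← card_pair hab]
  exact this.card_le_stabNum (by intro x hx; simp at hx; rcases hx with rfl | rfl <;> assumption)

theorem sum_stabNum_le {X I : Finset V} {T : V → Finset V} (hTX : ∀ i ∈ I, T i ⊆ X)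
    (hA : ∀ i ∈ I, ∀ j ∈ I, i ≠ j → Anti G (T i) (T j)) :
    ∑ i ∈ I, stabNum G (T i) ≤ stabNum G X := by
  choose W hW hWs hWc using fun i => exists_stab_card_eq G (T i)
  have hd : ∀ i ∈ I, ∀ j ∈ I, i ≠ j → Disjoint (W i) (W j) := by
    intro i hi j hj hij
    rw [Finset.disjoint_left]
    exact fun x hx hx' => (hA i hi j hj hij x (hW i hx) x (hW j hx')).1 rfl
  have hs : Stab G (I.biUnion W) := by
    intro x hx y hy
    obtain ⟨i, hi, hxi⟩ := mem_biUnion.1 hx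
    obtain ⟨j, hj, hyj⟩ := mem_biUnion.1 hy
    by_cases hij : i = j
    · subst hij; exact hWs i x hxi y hyj
    · exact (hA i hi j hj hij x (hW i hxi) y (hW j hyj)).2
  calc ∑ i ∈ I, stabNum G (T i) = ∑ i ∈ I, #(W i) := sum_congr rfl fun i _ => (hWc i).symm
    _ = #(I.biUnion W) := (card_biUnion fun i hi j hj => hd i hi j hj).symm
    _ ≤ _ := hs.card_le_stabNum (biUnion_subset.2 fun i hi => (hW i).trans (hTX i hi))

/-- The maximum degree in `X`, or `1` if there are no edges. -/
noncomputable def maxDeg (G : SimpleGraph V) (X : Finset V) : ℕ :=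
  max 1 (X.sup fun v => #(nb G X v))

theorem card_nb_le_maxDeg {X : Finset V} {v : V} (hv : v ∈ X) : #(nb G X v) ≤ maxDeg G X :=
  (le_sup (f := fun v => #(nb G X v)) hv).trans (le_max_right _ _)

theorem maxDeg_pos (X : Finset V) : 0 < maxDeg G X := lt_of_lt_of_le one_pos (le_max_left _ _)

theorem mul_maxDeg_le {X : Finset V} {c m : ℕ} (h1 : c ≤ m)
    (h2 : ∀ v ∈ X, c * #(nb G X v) ≤ m) : c * maxDeg G X ≤ m := by
  rcases X.eq_empty_or_nonempty with rfl | hX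
  · simpa [maxDeg] using h1
  obtain ⟨v, hv, hv'⟩ := exists_mem_eq_sup X hX fun v => #(nb G X v)
  rw [maxDeg, hv']
  rcases le_total 1 #(nb G X v) with h | h
  · rw [max_eq_right h]; exact h2 v hv
  · rw [max_eq_left h]; omega

/-- A subset of a sparse set that is densest on its own scale is nearly regular. -/
theorem exists_nearly_regular {X₀ : Finset V} {E : ℕ} (hE : 0 < E) (hX₀ : E ≤ #X₀)
    (hsp : ∀ v ∈ X₀, E * #(nb G X₀ v) ≤ #X₀) :
    ∃ X ⊆ X₀, E * maxDeg G X ≤ #X ∧ maxDeg G X * #X₀ ≤ #X ^ 2 ∧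
      (8 ≤ maxDeg G X → #X ≤ 2 * #(X.filter fun v => maxDeg G X ≤ 8 * #(nb G X v))) := by
  have hpos : 0 < #X₀ := by omega
  obtain ⟨X, hX, hmin⟩ := exists_min_image (X₀.powerset.filter Finset.Nonempty)
    (fun X => (maxDeg G X : ℝ) / (#X : ℝ) ^ 2)
    ⟨X₀, mem_filter.2 ⟨mem_powerset_self _, card_pos.1 hpos⟩⟩
  obtain ⟨hXX₀, hXne⟩ := mem_filter.1 hX
  rw [mem_powerset] at hXX₀
  have hmin' : ∀ Y ⊆ X₀, 0 < #Y → maxDeg G X * #Y ^ 2 ≤ maxDeg G Y * #X ^ 2 := by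
    intro Y hY hY0
    have h1 := hmin Y (mem_filter.2 ⟨mem_powerset.2 hY, card_pos.1 hY0⟩)
    have h2 : (0 : ℝ) < #Y := by exact_mod_cast hY0
    have h3 : (0 : ℝ) < #X := by exact_mod_cast card_pos.2 hXne
    rw [div_le_div_iff₀ (by positivity) (by positivity)] at h1
    exact_mod_cast h1
  have hED : E * maxDeg G X₀ ≤ #X₀ := mul_maxDeg_le hX₀ hsp
  have h1 := hmin' X₀ subset_rfl hpos
  have hle := card_le_card hXX₀
  have h2 : E * maxDeg G X * #X₀ ≤ #X ^ 2 := by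
    refine Nat.le_of_mul_le_mul_right (c := #X₀) ?_ hpos
    calc E * maxDeg G X * #X₀ * #X₀ = E * (maxDeg G X * #X₀ ^ 2) := by ring
      _ ≤ E * (maxDeg G X₀ * #X ^ 2) := by gcongr
      _ = E * maxDeg G X₀ * #X ^ 2 := by ring
      _ ≤ #X₀ * #X ^ 2 := by gcongr
      _ = _ := by ring
  refine ⟨X, hXX₀, ?_, ?_, ?_⟩
  · refine Nat.le_of_mul_le_mul_right (c := #X₀) (h2.trans ?_) hpos
    rw [sq]; gcongr
  · refine le_trans ?_ h2
    rw [mul_assoc]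
    exact Nat.le_mul_of_pos_left _ hE
  · intro h8
    by_contra! hc
    set F := X.filter fun v => maxDeg G X ≤ 8 * #(nb G X v) with hF
    set Y := X \ F with hY
    have hsplit : #Y + #F = #X := card_sdiff_add_card_eq_card (filter_subset _ _)
    have hYX : Y ⊆ X := sdiff_subset
    have hYc : #X < 2 * #Y := by omega
    have h3 := hmin' Y (hYX.trans hXX₀) (by omega)
    have h4 : 8 * maxDeg G Y ≤ maxDeg G X := by
      refine mul_maxDeg_le h8 fun v hv => ?_
      have h5 : ¬ maxDeg G X ≤ 8 * #(nb G X v) := fun h =>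
        (mem_sdiff.1 hv).2 (mem_filter.2 ⟨hYX hv, h⟩)
      have h6 : #(nb G Y v) ≤ #(nb G X v) := card_le_card (nb_mono hYX)
      omega
    have h5 : #X ^ 2 < (2 * #Y) ^ 2 := Nat.pow_lt_pow_left hYc (by norm_num)
    have h6 : 0 < maxDeg G X := maxDeg_pos X
    have h7 : 8 * (maxDeg G X * #Y ^ 2) ≤ maxDeg G X * #X ^ 2 := by
      calc _ ≤ 8 * (maxDeg G Y * #X ^ 2) := by gcongr
        _ = 8 * maxDeg G Y * #X ^ 2 := by ring
        _ ≤ _ := by gcongr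
    nlinarith [Nat.zero_le (maxDeg G X * #Y ^ 2), Nat.mul_lt_mul_of_pos_left h5 h6]

/-- Every large graph without induced seven-cycles and their complements contains, up to
complementation, `q` pairwise anticomplete sets that are only polynomially smaller in `q`. -/
theorem exists_anticomplete_family : ∃ d n₀ : ℕ, ∀ (V : Type u) (G : SimpleGraph V), NoC7 G →
    NoC7 Gᶜ → ∀ U : Finset V, n₀ ≤ #U → ∃ H, (H = G ∨ H = Gᶜ) ∧
      ∃ (q : ℕ) (I : Finset V) (T : V → Finset V), 2 ≤ q ∧ #I = q ∧ (∀ i ∈ I, T i ⊆ U) ∧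
        (∀ i ∈ I, ∀ j ∈ I, i ≠ j → Anti H (T i) (T j)) ∧ ∀ i ∈ I, #U ≤ q ^ d * #(T i) := by
  obtain ⟨q₁, hq₁⟩ := exists_pow_le_two_pow 41
  set q₀ := max q₁ 1000 with hq₀
  have hE : 0 < q₀ ^ 58 := by positivity
  obtain ⟨k, hk, hR⟩ := exists_sparse_subset.{u} (q₀ ^ 58) hE
  refine ⟨k + 292, k * q₀ ^ 58, fun V G hG hG' U hU => ?_⟩
  obtain ⟨H, hH, X₀, hX₀U, hUX₀, hsp⟩ := hR V G hG U
    (le_trans (Nat.le_mul_of_pos_right _ hE) hU)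
  have hHC : NoC7 H := by rcases hH with rfl | rfl <;> assumption
  refine ⟨H, hH, ?_⟩
  obtain ⟨X, hXX₀, hEX, hXsq, hhalf⟩ := exists_nearly_regular hE
    (Nat.le_of_mul_le_mul_left (hU.trans hUX₀) hk) hsp
  set D := maxDeg H X with hD
  have hD0 : 0 < D := maxDeg_pos X
  have hdeg : ∀ v ∈ X, #(nb H X v) ≤ D := fun v hv => card_nb_le_maxDeg hv
  obtain ⟨q, hq, hqX, hqX'⟩ : ∃ q, q₀ ≤ q ∧ D * q ^ 58 ≤ #X ∧ #X < D * (q + 1) ^ 58 := by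
    have hP : D * q₀ ^ 58 ≤ #X := by rw [mul_comm]; exact hEX
    have hself : ∀ q, D * q ^ 58 ≤ #X → q ≤ #X := fun q h =>
      (Nat.le_self_pow (by norm_num) q).trans ((Nat.le_mul_of_pos_left _ hD0).trans h)
    refine ⟨Nat.findGreatest (fun q => D * q ^ 58 ≤ #X) #X,
      Nat.le_findGreatest (hself _ hP) hP,
      Nat.findGreatest_spec (P := fun q => D * q ^ 58 ≤ #X) (hself _ hP) hP, ?_⟩
    by_contra! hc
    have := Nat.le_findGreatest (P := fun q => D * q ^ 58 ≤ #X) (hself _ hc) hc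
    omega
  have hq1000 : 1000 ≤ q := (le_max_right _ _).trans hq
  have hqk : k ≤ q ^ k := (Nat.lt_pow_self (by omega)).le
  have hU1 : #U ≤ q ^ (k + 232) * D := by
    refine Nat.le_of_mul_le_mul_left (?_ : D * #U ≤ D * (q ^ (k + 232) * D)) hD0
    calc D * #U ≤ D * (k * #X₀) := by gcongr
      _ = k * (D * #X₀) := by ring
      _ ≤ k * #X ^ 2 := by gcongr
      _ ≤ q ^ k * (D * (q + 1) ^ 58) ^ 2 := by gcongr
      _ ≤ q ^ k * (D * (q ^ 2) ^ 58) ^ 2 := by gcongr; nlinarith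
      _ = D * (q ^ (k + 232) * D) := by ring
  rcases lt_or_ge D (q ^ 60) with hDq | hDq
  · obtain ⟨I, hIX, hIq, hI⟩ := exists_independent H.Adj (fun _ _ h => h.symm) D q X (by
      intro v hv
      refine (card_le_card ?_).trans (hdeg v hv)
      intro w hw
      obtain ⟨h1, -, h2⟩ := mem_filter.1 hw
      exact mem_nb.2 ⟨h1, h2⟩) (by
      refine le_trans ?_ hqX
      calc q * (D + 1) ≤ q * (D * q) := by gcongr; nlinarith
        _ = D * q ^ 2 := by ring
        _ ≤ D * q ^ 58 := by
          gcongr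
          · omega
          · norm_num)
    refine ⟨q, I, fun i => {i}, by omega, hIq, ?_, ?_, ?_⟩
    · intro i hi
      exact singleton_subset_iff.2 (hX₀U (hXX₀ (hIX hi)))
    · intro i hi j hj hij a ha b hb
      rw [mem_singleton.1 ha, mem_singleton.1 hb]
      exact ⟨hij, hI i hi j hj hij⟩
    · intro i hi
      rw [card_singleton, mul_one]
      calc #U ≤ q ^ (k + 232) * D := hU1
        _ ≤ q ^ (k + 232) * q ^ 60 := by gcongr
        _ = _ := by ring
  · obtain ⟨I, T, hIq, hTX, hA, hT⟩ := exists_anticomplete hHC hq1000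
      (hq₁ q ((le_max_left _ _).trans hq)) hdeg (hhalf (by
        refine le_trans ?_ hDq
        calc 8 ≤ q := by omega
          _ ≤ q ^ 60 := Nat.le_self_pow (by norm_num) q)) hqX hDq
    refine ⟨q, I, T, by omega, hIq, fun i hi => (hTX i hi).trans (hXX₀.trans hX₀U), hA, ?_⟩
    intro i hi
    calc #U ≤ q ^ (k + 232) * D := hU1
      _ ≤ q ^ (k + 232) * (q ^ 60 * #(T i)) := by gcongr; exact hT i hi
      _ = _ := by ring

theorem rpow_le_of_anticomplete {U I : Finset V} {T : V → Finset V} {q d : ℕ} {τ : ℝ}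
    (hτ : 0 < τ) (hdτ : d * τ ≤ 1) (hq : 2 ≤ q) (hIq : #I = q) (hTU : ∀ i ∈ I, T i ⊆ U)
    (hA : ∀ i ∈ I, ∀ j ∈ I, i ≠ j → Anti G (T i) (T j))
    (hUT : ∀ i ∈ I, #U ≤ q ^ d * #(T i))
    (ih : ∀ i ∈ I, (#(T i) : ℝ) ^ τ ≤ stabNum G (T i) * stabNum Gᶜ (T i)) :
    (#U : ℝ) ^ τ ≤ stabNum G U * stabNum Gᶜ U := by
  have hq0 : (0 : ℝ) < q := by exact_mod_cast (by omega : 0 < q)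
  have hq1 : (1 : ℝ) ≤ q := by exact_mod_cast (by omega : 1 ≤ q)
  have h1 : ∀ i ∈ I, (#U : ℝ) ^ τ ≤ q * (stabNum G (T i) * stabNum Gᶜ U) := by
    intro i hi
    have h2 : (#U : ℝ) ≤ (q : ℝ) ^ d * #(T i) := by exact_mod_cast hUT i hi
    have h3 : (stabNum Gᶜ (T i) : ℝ) ≤ stabNum Gᶜ U := by exact_mod_cast stabNum_mono (hTU i hi)
    calc (#U : ℝ) ^ τ ≤ ((q : ℝ) ^ d * #(T i)) ^ τ := by gcongr
      _ = (q : ℝ) ^ (d * τ) * (#(T i) : ℝ) ^ τ := by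
        rw [Real.mul_rpow (by positivity) (by positivity), ← Real.rpow_natCast,
          ← Real.rpow_mul hq0.le]
      _ ≤ (q : ℝ) ^ (1 : ℝ) * (stabNum G (T i) * stabNum Gᶜ (T i)) := by
        gcongr
        · exact ih i hi
      _ ≤ _ := by rw [Real.rpow_one]; gcongr
  have h2 := sum_le_sum h1
  rw [sum_const, hIq, nsmul_eq_mul, ← mul_sum, ← sum_mul] at h2
  have h3 := le_of_mul_le_mul_left h2 hq0
  have h4 : (∑ i ∈ I, (stabNum G (T i) : ℝ)) ≤ stabNum G U := by
    exact_mod_cast sum_stabNum_le hTU hA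
  exact h3.trans (by gcongr)

theorem exists_rpow_le_stabNum : ∃ τ : ℝ, 0 < τ ∧ ∀ (V : Type u) (G : SimpleGraph V), NoC7 G →
    NoC7 Gᶜ → ∀ U : Finset V, (#U : ℝ) ^ τ ≤ stabNum G U * stabNum Gᶜ U := by
  obtain ⟨d, n₀, H⟩ := exists_anticomplete_family.{u}
  set m := d + n₀ + 1 with hm
  have hm0 : (0 : ℝ) < m := by exact_mod_cast Nat.succ_pos _
  refine ⟨1 / m, by positivity, fun V G hG hG' U => ?_⟩
  induction hn : #U using Nat.strong_induction_on generalizing U with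
  | _ n ih =>
  rw [← hn]
  rcases Nat.eq_zero_or_pos #U with h0 | hpos
  · rw [h0, Nat.cast_zero, Real.zero_rpow (by positivity)]
    positivity
  obtain ⟨a, ha⟩ := card_pos.1 hpos
  have p1 : 1 ≤ stabNum G U := stabNum_pos ha
  have p2 : 1 ≤ stabNum Gᶜ U := stabNum_pos ha
  rcases lt_or_ge #U n₀ with hlt | hge
  · rcases Nat.eq_or_lt_of_le hpos with h1 | h1
    · rw [← h1]
      simp only [Nat.succ_eq_add_one, zero_add, Nat.cast_one, Real.one_rpow]
      exact_mod_cast Nat.mul_le_mul p1 p2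
    · obtain ⟨b, hb, hab⟩ := exists_mem_ne h1 a
      have h2 : 2 ≤ stabNum G U * stabNum Gᶜ U := by
        by_cases hadj : G.Adj b a
        · have := two_le_stabNum (G := Gᶜ) hb ha hab (by rw [compl_adj]; tauto)
          nlinarith
        · have := two_le_stabNum (G := G) hb ha hab hadj
          nlinarith
      have h3 : (#U : ℝ) ≤ 2 ^ (m : ℝ) := by
        rw [Real.rpow_natCast]
        have : #U ≤ 2 ^ m := by
          have := Nat.lt_two_pow_self (n := m)
          omega
        exact_mod_cast this
      calc (#U : ℝ) ^ (1 / (m : ℝ)) ≤ ((2 : ℝ) ^ (m : ℝ)) ^ (1 / (m : ℝ)) := by gcongr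
        _ = 2 := by
          rw [← Real.rpow_mul (by norm_num), mul_one_div_cancel hm0.ne', Real.rpow_one]
        _ ≤ _ := by exact_mod_cast h2
  · obtain ⟨K, hK, q, I, T, hq, hIq, hTU, hA, hUT⟩ := H V G hG hG' U hge
    have hdτ : (d : ℝ) * (1 / m) ≤ 1 := by
      rw [mul_one_div, div_le_one hm0]
      exact_mod_cast (by omega : d ≤ m)
    have hTpos : ∀ i ∈ I, 0 < #(T i) := by
      intro i hi
      by_contra! hc
      have := hUT i hi
      rw [Nat.le_zero.1 hc, mul_zero] at this
      omega
    have hlt : ∀ i ∈ I, #(T i) < #U := by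
      intro i hi
      obtain ⟨j, hj, hji⟩ := exists_mem_ne (by omega : 1 < #I) i
      obtain ⟨x, hx⟩ := card_pos.1 (hTpos j hj)
      refine card_lt_card ⟨hTU i hi, fun hs => ?_⟩
      exact (hA j hj i hi hji x hx x (hs (hTU j hj hx))).1 rfl
    have ih' : ∀ i ∈ I, (#(T i) : ℝ) ^ (1 / (m : ℝ)) ≤
        stabNum G (T i) * stabNum Gᶜ (T i) := fun i hi =>
      ih #(T i) (hn ▸ hlt i hi) (T i) rfl
    rcases hK with rfl | rfl
    · exact rpow_le_of_anticomplete (by positivity) hdτ hq hIq hTU hA hUT ih'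
    · rw [mul_comm]
      have := rpow_le_of_anticomplete (by positivity) hdτ hq hIq hTU hA hUT
        (fun i hi => by rw [compl_compl, mul_comm]; exact ih' i hi)
      rwa [compl_compl] at this

theorem stabNum_univ_le [Fintype V] (G : SimpleGraph V) : stabNum G univ ≤ Gᶜ.cliqueNum := by
  obtain ⟨T, -, hT, hTc⟩ := exists_stab_card_eq G univ
  rw [← hTc]
  refine IsClique.card_le_cliqueNum (tc := ?_)
  intro x hx y hy hxy
  exact (compl_adj _ _ _).2 ⟨hxy, hT x hx y hy⟩

theorem noC7_compl (h : ¬ Nonempty ((cycleGraph 7)ᶜ ↪g G)) : NoC7 Gᶜ := by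
  rintro ⟨f⟩
  refine h ⟨⟨f.toEmbedding, fun {a b} => ?_⟩⟩
  have := f.map_rel_iff (a := a) (b := b)
  rw [compl_adj] at this ⊢
  by_cases hab : a = b
  · subst hab; simp
  · have hne : f a ≠ f b := fun e => hab (f.injective e)
    change G.Adj (f a) (f b) ↔ _
    tauto
end

/-- `{C₇, C̄₇}` has the Erdős–Hajnal property. -/
theorem stmt_3 :
    ∃ τ : ℝ, 0 < τ ∧
      ∀ (V : Type) [Fintype V] (G : SimpleGraph V),
        ¬ Nonempty (cycleGraph 7 ↪g G) →
        ¬ Nonempty ((cycleGraph 7)ᶜ ↪g G) →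
        (Fintype.card V : ℝ) ^ τ ≤ ((max (alphaNum G) (omegaNum G) : ℕ) : ℝ) := by
  obtain ⟨τ, hτ, H⟩ := exists_rpow_le_stabNum.{0}
  refine ⟨τ / 2, by positivity, fun V _ G hG hG' => ?_⟩
  have h := H V G hG (noC7_compl hG') Finset.univ
  rw [Finset.card_univ] at h
  have h1 : stabNum G Finset.univ ≤ max (alphaNum G) (omegaNum G) :=
    (stabNum_univ_le G).trans (le_max_left _ _)
  have h2 : stabNum Gᶜ Finset.univ ≤ max (alphaNum G) (omegaNum G) := by
    refine (stabNum_univ_le Gᶜ).trans ?_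
    rw [compl_compl]
    exact le_max_right _ _
  set M := max (alphaNum G) (omegaNum G)
  have h3 : (Fintype.card V : ℝ) ^ τ ≤ (M : ℝ) ^ 2 := by
    refine h.trans ?_
    rw [sq]
    exact_mod_cast Nat.mul_le_mul h1 h2
  refine le_of_sq_le_sq ?_ (by positivity)
  refine le_trans (le_of_eq ?_) h3
  rw [← Real.rpow_natCast, ← Real.rpow_mul (by positivity)]
  congr 1
  push_cast
  ring
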